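/- Let n ≥ 1 be an integer, ξ ∈ F_q((T^{-1})), and let k ≥ 0 be the integer with p^k ≤ n < p^{k+1}. Then w_n(ξ)/p^k − n + 2/p^k − 1 ≤ w_n*(ξ) ≤ w_n(ξ). Furthermore, if 1 ≤ n < 2p, then w_n(ξ) − n + 1 ≤ w_n*(ξ) ≤ w_n(ξ). (In particular, taking n = 2, one gets 0 ≤ w_2(ξ) − w_2*(ξ) ≤ 1 whenever these quantities are finite.) -/

import Mathlib

open Polynomial Filter
open scoped ENNReal

noncomputable section

namespace Ooto

variable (Fq : Type) [Field Fq] [Fintype Fq]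

/-- `F_q((T⁻¹))`, realized as formal Laurent series in the variable `X = T⁻¹`. -/
abbrev K := LaurentSeries Fq

/-- The element `T = X⁻¹` of `F_q((T⁻¹))`. -/
def TT : K Fq := HahnSeries.single (-1 : ℤ) (1 : Fq)

/-- The natural embedding of `F_q[T]` into `F_q((T⁻¹))`, sending `T` to `T`. -/
def polyToK : Polynomial Fq →+* K Fq := Polynomial.eval₂RingHom HahnSeries.C (TT Fq)

open Classical in
/-- The absolute value on `F_q((T⁻¹))`: `|0| = 0` and `|ξ| = q^{-N}` where `N` is the order
of `ξ` as a series in `T⁻¹`. -/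
def kabs (f : K Fq) : ℝ := if f = 0 then 0 else (Fintype.card Fq : ℝ) ^ (-f.order)

/-- A fixed algebraic closure of `F_q((T⁻¹))`. -/
abbrev L := AlgebraicClosure (K Fq)

def toL : K Fq →+* L Fq := algebraMap (K Fq) (L Fq)

def φ : Polynomial Fq →+* L Fq := (toL Fq).comp (polyToK Fq)

/-- Evaluation of `P ∈ (F_q[T])[X]` at `ξ ∈ F_q((T⁻¹))`. -/
def evalK (P : Polynomial (Polynomial Fq)) (ξ : K Fq) : K Fq :=
  Polynomial.eval₂ (polyToK Fq) ξ P

/-- Evaluation of `P ∈ (F_q[T])[X]` at a point of the algebraic closure. -/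
def evalL (P : Polynomial (Polynomial Fq)) (α : L Fq) : L Fq :=
  Polynomial.eval₂ (φ Fq) α P

/-- Height of a polynomial over `F_q[T]`: the maximum of the absolute values of its
coefficients. -/
def Hpoly (P : Polynomial (Polynomial Fq)) : ℝ := ⨆ i : ℕ, kabs Fq (polyToK Fq (P.coeff i))

/-- `P` is the minimal polynomial of `α`: a non-constant irreducible primitive polynomial in
`(F_q[T])[X]` whose leading coefficient is monic in `T`, vanishing at `α`. -/
def IsMinPolyOf (P : Polynomial (Polynomial Fq)) (α : L Fq) : Prop :=
  0 < P.natDegree ∧ Irreducible P ∧ P.IsPrimitive ∧ (P.leadingCoeff).Monic ∧ evalL Fq P α = 0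

/-- `α` is algebraic over `F_q(T)`. -/
def IsAlgElem (α : L Fq) : Prop := ∃ P, IsMinPolyOf Fq P α

open Classical in
/-- The minimal polynomial of an algebraic element (junk value `0` otherwise). -/
def minPolyPrim (α : L Fq) : Polynomial (Polynomial Fq) :=
  if h : IsAlgElem Fq α then h.choose else 0

/-- Degree of an algebraic element. -/
def degAlg (α : L Fq) : ℕ := (minPolyPrim Fq α).natDegree

/-- Height of an algebraic element. -/
def heightAlg (α : L Fq) : ℝ := Hpoly Fq (minPolyPrim Fq α)

/-- Inseparable degree of a polynomial `P ∈ (F_q[T])[X]`: the largest power `f = p^j` of the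
characteristic such that `P(X) = R(X^f)` for some `R`. -/
def insepDeg (P : Polynomial (Polynomial Fq)) : ℕ :=
  (ringChar Fq) ^ sSup {j : ℕ | ∃ R : Polynomial (Polynomial Fq),
    P = R.comp (Polynomial.X ^ (ringChar Fq) ^ j)}

/-- Inseparable degree of an algebraic element. -/
def insepAlg (α : L Fq) : ℕ := insepDeg Fq (minPolyPrim Fq α)

/-- `α'` is the Galois conjugate of the quadratic element `α` (equal to `α` itself in the
inseparable case): the minimal polynomial of `α` factors as `A(X - α)(X - α')`. -/
def IsConjOf (α' α : L Fq) : Prop :=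
  (minPolyPrim Fq α).natDegree = 2 ∧
  (minPolyPrim Fq α).map (φ Fq) =
    Polynomial.C (φ Fq (minPolyPrim Fq α).leadingCoeff) *
      (Polynomial.X - Polynomial.C α) * (Polynomial.X - Polynomial.C α')

/-- `v` is an absolute value on the algebraic closure of `F_q((T⁻¹))` extending `kabs`
(such an extension exists and is unique). -/
structure IsAbsExt (v : L Fq → ℝ) : Prop where
  eq_zero_iff : ∀ x, v x = 0 ↔ x = 0
  map_mul : ∀ x y, v (x * y) = v x * v y
  add_le : ∀ x y, v (x + y) ≤ max (v x) (v y)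
  nonneg : ∀ x, 0 ≤ v x
  extends_kabs : ∀ f : K Fq, v (toL Fq f) = kabs Fq f

/-- The exponent `w_n(ξ)`: the supremum of the real numbers `w` such that
`0 < |P(ξ)| ≤ H(P)^{-w}` for infinitely many `P ∈ (F_q[T])[X]` of degree at most `n`. -/
def wExp (n : ℕ) (ξ : K Fq) : EReal :=
  sSup {x : EReal | ∃ w : ℝ, x = (w : EReal) ∧
    {P : Polynomial (Polynomial Fq) | P.natDegree ≤ n ∧ 0 < kabs Fq (evalK Fq P ξ) ∧
      kabs Fq (evalK Fq P ξ) ≤ Hpoly Fq P ^ (-w)}.Infinite}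

/-- The exponent `w_n^*(ξ)`: the supremum of the real numbers `w` such that
`0 < |ξ - α| ≤ H(α)^{-w-1}` for infinitely many algebraic `α` of degree at most `n`. -/
def wStarExp (v : L Fq → ℝ) (n : ℕ) (ξ : K Fq) : EReal :=
  sSup {x : EReal | ∃ w : ℝ, x = (w : EReal) ∧
    {α : L Fq | IsAlgElem Fq α ∧ degAlg Fq α ≤ n ∧ 0 < v (toL Fq ξ - α) ∧
      v (toL Fq ξ - α) ≤ heightAlg Fq α ^ (-w - 1)}.Infinite}

/-- `pSeq a n = p_{n-1}`, the numerators of the convergents of `[a 0; a 1, a 2, …]`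
(with `p_{-1} = 1`). -/
def pSeq (a : ℕ → Polynomial Fq) : ℕ → Polynomial Fq
  | 0 => 1
  | 1 => a 0
  | (n+2) => a (n+1) * pSeq a (n+1) + pSeq a n

/-- `qSeq a n = q_{n-1}`, the denominators of the convergents of `[a 0; a 1, a 2, …]`
(with `q_{-1} = 0`). -/
def qSeq (a : ℕ → Polynomial Fq) : ℕ → Polynomial Fq
  | 0 => 0
  | 1 => 1
  | (n+2) => a (n+1) * qSeq a (n+1) + qSeq a n

/-- `ξ` has continued fraction expansion `[a 0; a 1, a 2, …]`: each partial quotient `a n`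
(`n ≥ 1`) has degree at least one and `|ξ - p_n/q_n| = |q_n|⁻¹|q_{n+1}|⁻¹` for all `n ≥ 0`. -/
def IsCFOf (ξ : K Fq) (a : ℕ → Polynomial Fq) : Prop :=
  (∀ n, 1 ≤ n → 1 ≤ (a n).natDegree) ∧
  ∀ n : ℕ,
    kabs Fq (ξ - polyToK Fq (pSeq Fq a (n+1)) / polyToK Fq (qSeq Fq a (n+1))) =
      (kabs Fq (polyToK Fq (qSeq Fq a (n+1))) * kabs Fq (polyToK Fq (qSeq Fq a (n+2))))⁻¹

/-- The sequence of partial quotients of `[0; b 0, b 1, b 2, …]`. -/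
def cfA (b : ℕ → Polynomial Fq) : ℕ → Polynomial Fq := fun n => if n = 0 then 0 else b (n - 1)

/-- `qden b n` is the denominator `q_n` of the `n`-th convergent of `[0; b 0, b 1, …]`. -/
def qden (b : ℕ → Polynomial Fq) (n : ℕ) : Polynomial Fq := qSeq Fq (cfA Fq b) (n + 1)

/-- `V^w` for a finite word `V` and a real `w ≥ 0`: `⌊w⌋` copies of `V` followed by the prefix
of `V` of length `⌈(w - ⌊w⌋)|V|⌉`. -/
def wordPow {A : Type*} (V : List A) (w : ℝ) : List A :=
  (List.replicate ⌊w⌋₊ V).flatten ++ V.take ⌈(w - ⌊w⌋₊) * V.length⌉₊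

/-- The finite word `l` is a prefix of the infinite word `b`. -/
def IsPrefixOfSeq {A : Type*} (l : List A) (b : ℕ → A) : Prop :=
  ∀ (i : ℕ) (h : i < l.length), l.get ⟨i, h⟩ = b i

/-- Condition `(*)_ρ` for an infinite word. -/
def SatisfiesCond {A : Type*} (b : ℕ → A) (ρ : ℝ) : Prop :=
  ∃ (U V : ℕ → List A) (w : ℕ → ℝ),
    (∀ n, V n ≠ []) ∧ (∀ n, 0 ≤ w n) ∧
    (∀ n, IsPrefixOfSeq (U n ++ wordPow (V n) (w n)) b) ∧
    (∀ n, ρ * (((U n).length + (V n).length : ℕ) : ℝ) ≤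
      (((U n).length + (wordPow (V n) (w n)).length : ℕ) : ℝ)) ∧
    StrictMono fun n => (wordPow (V n) (w n)).length

/-- The Diophantine exponent of an infinite word: the supremum of the `ρ` such that the word
satisfies Condition `(*)_ρ`. -/
def dioExp {A : Type*} (b : ℕ → A) : EReal :=
  sSup {x : EReal | ∃ ρ : ℝ, x = (ρ : EReal) ∧ SatisfiesCond b ρ}

/-- The complexity function: the number of distinct blocks of `n` consecutive letters. -/
def complexity {A : Type*} (b : ℕ → A) (n : ℕ) : ℕ∞ :=
  {w : Fin n → A | ∃ i : ℕ, ∀ k : Fin n, w k = b (i + k)}.encard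

/-- The infinite word `b` is ultimately periodic. -/
def UltimatelyPeriodic {A : Type*} (b : ℕ → A) : Prop :=
  ∃ N T : ℕ, 0 < T ∧ ∀ n, N ≤ n → b (n + T) = b n

/-!
If `α` is a root of `P`, then `|P(ξ)| ≪ |ξ - α| H(P)`, which gives `w_n^*(ξ) ≤ w_n(ξ)`. In the
other direction, heights being multiplicative, an exponent smaller than `w_n(ξ)` is attained by
infinitely many irreducible `Q`. Write `Q(X) = R(X ^ p ^ m)` with `R` separable of degree `d`.
The discriminant of `R` is a nonzero polynomial in `T`, hence of absolute value at least `1`, so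
the roots of `R` are far enough apart for the root `β` nearest to `ξ ^ p ^ m` to satisfy
`|ξ ^ p ^ m - β| ≪ |Q(ξ)| H(R) ^ (d - 2)`. The left-hand side is `|ξ - α| ^ p ^ m` for the root
`α` of `Q` with `α ^ p ^ m = β`, and `p ^ m ≤ p ^ k`.

When `n < 2 * p`, an inseparable `Q` is a sum of terms `T ^ i * P_i ^ p` with `0 ≤ i < p` and each
`P_i` of degree at most one. These terms have distinct absolute values at `ξ`, so
`|P_i(ξ)| ^ p ≤ |Q(ξ)|` and inseparable approximations contribute no more than `w_1(ξ) = w_1^*(ξ)`.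
-/

lemma discr_ne_zero_iff_separable {E : Type*} [Field E] {f : E[X]} (hf : 0 < f.natDegree) :
    f.discr ≠ 0 ↔ f.Separable := by
  have hf0 : f ≠ 0 := fun h ↦ by simp [h] at hf
  have hlead : f.leadingCoeff ≠ 0 := leadingCoeff_ne_zero.2 hf0
  obtain ⟨k, hk⟩ := Nat.exists_eq_add_of_le (natDegree_derivative_le f)
  have hres := resultant_deriv (natDegree_pos_iff_degree_pos.1 hf)
  rw [hk, resultant_add_right_deg _ _ _ _ _ le_rfl] at hres
  have : resultant f f.derivative ≠ 0 ↔ f.discr ≠ 0 := by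
    rw [← mul_ne_zero_iff_left (pow_ne_zero k hlead), ← coeff_natDegree, hres]
    simp [hf0]
  rw [← this, Ne, resultant_eq_zero_iff, not_and, not_not]
  exact ⟨fun h ↦ h (.inl hf0), fun h _ ↦ h⟩

lemma exists_eq_C_mul_prod_X_sub_C {E : Type*} [Field E] {f : E[X]} (hf : f.Splits)
    (hsep : f.Separable) :
    ∃ s : Finset E, s.card = f.natDegree ∧ f = C f.leadingCoeff * ∏ i ∈ s, (X - C i) := by
  classical
  have hnodup := nodup_roots hsep
  refine ⟨f.roots.toFinset, ?_, ?_⟩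
  · rw [Multiset.toFinset_card_of_nodup hnodup, hf.natDegree_eq_card_roots]
  · conv_lhs => rw [hf.eq_prod_roots]
    rw [Finset.prod, Multiset.toFinset_val, hnodup.dedup]

section Nonarchimedean

variable {E : Type*} [Field E] {V : AbsoluteValue E ℝ}

lemma isNonarchimedean_sub_le (hV : IsNonarchimedean V) (x y : E) :
    V (x - y) ≤ max (V x) (V y) := by
  simpa only [sub_eq_add_neg, V.map_neg] using hV x (-y)

lemma isNonarchimedean_sub_le_max_one_mul (hV : IsNonarchimedean V) (x y : E) :
    V (x - y) ≤ max 1 (V x) * max 1 (V y) :=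
  (isNonarchimedean_sub_le hV x y).trans <| max_le
    ((le_max_right _ _).trans (le_mul_of_one_le_right (by positivity) (le_max_left _ _)))
    ((le_max_right _ _).trans (le_mul_of_one_le_left (by positivity) (le_max_left _ _)))

lemma le_apply_sum_of_pairwise_ne (hV : IsNonarchimedean V) {ι : Type*} {s : Finset ι}
    {t : ι → E} (ht : ∀ i ∈ s, ∀ j ∈ s, i ≠ j → t i ≠ 0 → V (t i) ≠ V (t j))
    {i : ι} (hi : i ∈ s) : V (t i) ≤ V (∑ j ∈ s, t j) := by
  obtain ⟨m, hm, hmax⟩ := s.exists_max_image (fun j ↦ V (t j)) ⟨i, hi⟩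
  rcases eq_or_ne (t m) 0 with h0 | h0
  · calc V (t i) ≤ V (t m) := hmax i hi
      _ = 0 := by rw [h0, map_zero]
      _ ≤ _ := V.nonneg _
  · have hsum : V (∑ j ∈ s, t j) = V (t m) :=
      hV.apply_sum_eq_of_lt (fun a ↦ (V.map_neg a).symm) hm fun j hj hjm ↦
        (hmax j hj).lt_of_ne (ht m hm j hj hjm.symm h0).symm
    exact hsum ▸ hmax i hi

lemma prod_offDiag_le_prod_max_one_pow [DecidableEq E] (hV : IsNonarchimedean V)
    (s : Finset E) :
    (∏ i ∈ s, ∏ j ∈ s.erase i, V (i - j)) * (∏ i ∈ s, max 1 (V i)) ^ 2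
      ≤ (∏ i ∈ s, max 1 (V i)) ^ (2 * s.card) := by
  set N := ∏ i ∈ s, max 1 (V i) with hN
  have hrow : ∀ i ∈ s, (∏ j ∈ s.erase i, V (i - j)) * max 1 (V i) ^ 2
      ≤ max 1 (V i) ^ s.card * N := fun i hi ↦
    calc (∏ j ∈ s.erase i, V (i - j)) * max 1 (V i) ^ 2
        ≤ (∏ j ∈ s.erase i, max 1 (V i) * max 1 (V j)) * max 1 (V i) ^ 2 := by
          gcongr with j
          exact isNonarchimedean_sub_le_max_one_mul hV i j
      _ = max 1 (V i) ^ ((s.erase i).card + 1) *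
            ((∏ j ∈ s.erase i, max 1 (V j)) * max 1 (V i)) := by
          rw [Finset.prod_mul_distrib, Finset.prod_const]; ring
      _ = max 1 (V i) ^ s.card * N := by
          rw [Finset.card_erase_add_one hi, Finset.prod_erase_mul s (fun j ↦ max 1 (V j)) hi]
  calc (∏ i ∈ s, ∏ j ∈ s.erase i, V (i - j)) * N ^ 2
      = ∏ i ∈ s, ((∏ j ∈ s.erase i, V (i - j)) * max 1 (V i) ^ 2) := by
        rw [Finset.prod_mul_distrib, Finset.prod_pow]
    _ ≤ ∏ i ∈ s, (max 1 (V i) ^ s.card * N) :=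
        Finset.prod_le_prod (fun i _ ↦ mul_nonneg
          (Finset.prod_nonneg fun _ _ ↦ V.nonneg _) (by positivity)) hrow
    _ = N ^ (2 * s.card) := by
        rw [Finset.prod_mul_distrib, Finset.prod_pow, Finset.prod_const, ← hN]; ring

lemma prod_offDiag_eq_sq_mul [DecidableEq E] {s : Finset E} {α : E} (hα : α ∈ s) :
    ∏ i ∈ s, ∏ j ∈ s.erase i, V (i - j) =
      (∏ j ∈ s.erase α, V (α - j)) ^ 2 *
        ∏ i ∈ s.erase α, ∏ j ∈ (s.erase α).erase i, V (i - j) := by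
  have hrow : ∀ i ∈ s.erase α, ∏ j ∈ s.erase i, V (i - j) =
      V (α - i) * ∏ j ∈ (s.erase α).erase i, V (i - j) := fun i hi ↦ by
    rw [← Finset.mul_prod_erase (s.erase i) (fun j ↦ V (i - j))
      (Finset.mem_erase.2 ⟨(Finset.ne_of_mem_erase hi).symm, hα⟩), Finset.erase_right_comm,
      V.map_sub i α]
  rw [← Finset.mul_prod_erase s _ hα, Finset.prod_congr rfl hrow, Finset.prod_mul_distrib]
  ring

lemma abs_discr_C_mul_prod_X_sub_C [DecidableEq E] {a : E} (ha : a ≠ 0) {s : Finset E}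
    (hs : s.Nonempty) :
    V (C a * ∏ i ∈ s, (X - C i)).discr =
      V a ^ (2 * (s.card - 1)) * ∏ i ∈ s, ∏ j ∈ s.erase i, V (i - j) := by
  set f := C a * ∏ i ∈ s, (X - C i) with hf
  have hroots : f.roots = s.val := by rw [hf, roots_C_mul _ ha, roots_prod_X_sub_C]
  have hlead : f.leadingCoeff = a := by
    rw [hf, leadingCoeff_mul, leadingCoeff_C, leadingCoeff_prod]; simp
  have hdeg : f.natDegree = s.card := by
    rw [hf, natDegree_C_mul ha]; exact natDegree_finsetProd_X_sub_C_eq_card s id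
  have hsplits : f.Splits := splits_iff_card_roots.2 (by rw [hroots, hdeg]; rfl)
  have hderiv : ∀ i ∈ s, f.derivative.eval i = a * ∏ j ∈ s.erase i, (i - j) := fun i hi ↦ by
    rw [hf, ← Finset.mul_prod_erase s _ hi]
    simp [derivative_mul, eval_prod]
  have hres : V a * V f.discr = V a * (V a ^ (2 * (s.card - 1)) *
      ∏ i ∈ s, ∏ j ∈ s.erase i, V (i - j)) :=
    calc V a * V f.discr = V (resultant f f.derivative f.natDegree (f.natDegree - 1)) := by
          rw [resultant_deriv (natDegree_pos_iff_degree_pos.1 (hdeg ▸ hs.card_pos)), hlead]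
          simp only [map_mul, map_pow, V.map_neg, map_one, one_pow, one_mul]
      _ = V a ^ (s.card - 1) * ∏ i ∈ s, V (f.derivative.eval i) := by
          rw [resultant_eq_prod_eval f _ _ (natDegree_derivative_le f) hsplits, hroots, hlead,
            hdeg, map_mul, map_pow, ← map_prod, Finset.prod]
      _ = V a ^ (s.card - 1) * ∏ i ∈ s, (V a * ∏ j ∈ s.erase i, V (i - j)) := by
          congr 1
          exact Finset.prod_congr rfl fun i hi ↦ by rw [hderiv i hi, map_mul, map_prod]
      _ = _ := by
          rw [Finset.prod_mul_distrib, Finset.prod_const,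
            show V a ^ s.card = V a * V a ^ (s.card - 1) by
              rw [← pow_succ', Nat.sub_add_cancel hs.card_pos]]
          ring
  exact mul_left_cancel₀ (V.ne_zero ha) hres

lemma mul_prod_max_one_le_of_one_le_discr [DecidableEq E] (hV : IsNonarchimedean V) {a : E}
    (ha : a ≠ 0) {s : Finset E} (hdiscr : 1 ≤ V (C a * ∏ i ∈ s, (X - C i)).discr) {α : E}
    (hα : α ∈ s) :
    V a * ∏ i ∈ s.erase α, max 1 (V i) ≤
      (V a * ∏ j ∈ s.erase α, V (α - j)) *
        (V a * ∏ i ∈ s.erase α, max 1 (V i)) ^ (s.card - 1) := by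
  have hG : 0 ≤ ∏ j ∈ s.erase α, V (α - j) := Finset.prod_nonneg fun _ _ ↦ V.nonneg _
  have hpairs := prod_offDiag_le_prod_max_one_pow hV (s.erase α)
  rw [abs_discr_C_mul_prod_X_sub_C ha ⟨α, hα⟩, prod_offDiag_eq_sq_mul hα] at hdiscr
  rw [Finset.card_erase_of_mem hα] at hpairs
  set d := s.card - 1
  set G := ∏ j ∈ s.erase α, V (α - j)
  set N := ∏ i ∈ s.erase α, max 1 (V i)
  set W := ∏ i ∈ s.erase α, ∏ j ∈ (s.erase α).erase i, V (i - j)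
  -- In the square of the claim, as in the discriminant, every root difference occurs twice.
  refine (sq_le_sq₀ (by positivity) (by positivity)).1 ?_
  calc (V a * N) ^ 2 = 1 * (V a * N) ^ 2 := (one_mul _).symm
    _ ≤ V a ^ (2 * d) * (G ^ 2 * W) * (V a * N) ^ 2 := by gcongr
    _ = (V a ^ d * (V a * G)) ^ 2 * (W * N ^ 2) := by ring
    _ ≤ (V a ^ d * (V a * G)) ^ 2 * N ^ (2 * d) := by gcongr
    _ = (V a * G * (V a * N) ^ d) ^ 2 := by ring

lemma exists_root_mul_le_of_one_le_discr [DecidableEq E] (hV : IsNonarchimedean V) {a : E}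
    (ha : a ≠ 0) {s : Finset E} (hs : s.Nonempty)
    (hdiscr : 1 ≤ V (C a * ∏ i ∈ s, (X - C i)).discr) (x : E) :
    ∃ α ∈ s, V a * V (x - α) ^ s.card ≤ V ((C a * ∏ i ∈ s, (X - C i)).eval x) ∧
      V (x - α) * (V a * ∏ i ∈ s.erase α, max 1 (V i)) ≤
        V ((C a * ∏ i ∈ s, (X - C i)).eval x) *
          (V a * ∏ i ∈ s.erase α, max 1 (V i)) ^ (s.card - 1) := by
  obtain ⟨α, hα, hnearest⟩ := s.exists_min_image (fun i ↦ V (x - i)) hs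
  have heval : V ((C a * ∏ i ∈ s, (X - C i)).eval x) = V a * ∏ i ∈ s, V (x - i) := by
    simp [eval_prod]
  have hG : ∏ j ∈ s.erase α, V (α - j) ≤ ∏ j ∈ s.erase α, V (x - j) :=
    Finset.prod_le_prod (fun _ _ ↦ V.nonneg _) fun j hj ↦ by
      have hmax := isNonarchimedean_sub_le hV (x - j) (x - α)
      rwa [sub_sub_sub_cancel_left, max_eq_left (hnearest j (Finset.mem_of_mem_erase hj))] at hmax
  refine ⟨α, hα, ?_, ?_⟩
  · rw [heval, ← Finset.prod_const]
    gcongr with i hi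
    exact hnearest i hi
  · calc V (x - α) * (V a * ∏ i ∈ s.erase α, max 1 (V i))
        ≤ V (x - α) * ((V a * ∏ j ∈ s.erase α, V (x - j)) *
            (V a * ∏ i ∈ s.erase α, max 1 (V i)) ^ (s.card - 1)) := by
          gcongr V (x - α) * ?_
          refine (mul_prod_max_one_le_of_one_le_discr hV ha hdiscr hα).trans ?_
          gcongr
      _ = V ((C a * ∏ i ∈ s, (X - C i)).eval x) *
            (V a * ∏ i ∈ s.erase α, max 1 (V i)) ^ (s.card - 1) := by
          rw [heval, ← Finset.mul_prod_erase s (fun i ↦ V (x - i)) hα]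
          ring

lemma gaussNorm_X_sub_C (α : E) : (X - C α).gaussNorm V 1 = max 1 (V α) := by
  apply le_antisymm
  · obtain ⟨i, hi⟩ := (X - C α).exists_eq_gaussNorm V 1
    rw [hi, one_pow, mul_one]
    match i with
    | 0 => simp
    | 1 => simp
    | n + 2 => simp [coeff_X]
  · apply max_le
    · have := (X - C α).le_gaussNorm V zero_le_one 1
      rwa [coeff_sub, coeff_X_one, coeff_C_succ, sub_zero, map_one, one_pow, mul_one] at this
    · have := (X - C α).le_gaussNorm V zero_le_one 0
      rwa [coeff_sub, coeff_X_zero, coeff_C_zero, zero_sub, V.map_neg, pow_zero, mul_one] at this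

lemma gaussNorm_C_mul_prod_X_sub_C (hV : IsNonarchimedean V) (a : E) (s : Finset E) :
    (C a * ∏ i ∈ s, (X - C i)).gaussNorm V 1 = V a * ∏ i ∈ s, max 1 (V i) := by
  classical
  induction s using Finset.induction_on with
  | empty => simp
  | insert i s hi ih =>
    rw [Finset.prod_insert hi, Finset.prod_insert hi, mul_left_comm, gaussNorm_mul hV one_pos, ih,
      gaussNorm_X_sub_C, mul_left_comm]

lemma abs_eval_le_gaussNorm_mul (hV : IsNonarchimedean V) {f : E[X]} {n : ℕ}
    (hf : f.natDegree ≤ n) (x : E) :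
    V (f.eval x) ≤ f.gaussNorm V 1 * max 1 (V x) ^ n := by
  rw [eval_eq_sum_range]
  obtain ⟨i, hi, hle⟩ := hV.finset_image_add_of_nonempty (fun i ↦ f.coeff i * x ^ i)
    (Finset.nonempty_range_add_one (n := f.natDegree))
  calc V (∑ i ∈ Finset.range (f.natDegree + 1), f.coeff i * x ^ i)
      ≤ V (f.coeff i * x ^ i) := hle
    _ = V (f.coeff i) * V x ^ i := by rw [map_mul, map_pow]
    _ ≤ f.gaussNorm V 1 * max 1 (V x) ^ i := by
        gcongr
        · exact f.gaussNorm_nonneg V zero_le_one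
        · simpa using f.le_gaussNorm V zero_le_one i
        · exact le_max_right _ _
    _ ≤ f.gaussNorm V 1 * max 1 (V x) ^ n := by
        gcongr
        · exact f.gaussNorm_nonneg V zero_le_one
        · exact le_max_left _ _
        · rw [Finset.mem_range] at hi; omega

lemma abs_eval_le_abs_sub_mul_gaussNorm_mul (hV : IsNonarchimedean V) {f : E[X]} {n : ℕ}
    (hf : f.natDegree ≤ n) {α : E} (hα : f.IsRoot α) (x : E) :
    V (f.eval x) ≤ V (x - α) * f.gaussNorm V 1 * max 1 (V x) ^ n := by
  obtain ⟨g, rfl⟩ := dvd_iff_isRoot.2 hα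
  rcases eq_or_ne g 0 with rfl | hg
  · simp
  have hgn : g.natDegree ≤ n :=
    (natDegree_le_of_dvd (dvd_mul_left _ _) (mul_ne_zero (X_sub_C_ne_zero α) hg)).trans hf
  have hg0 : 0 ≤ g.gaussNorm V 1 := g.gaussNorm_nonneg V zero_le_one
  calc V (((X - C α) * g).eval x) = V (x - α) * V (g.eval x) := by simp
    _ ≤ V (x - α) * (1 * g.gaussNorm V 1 * max 1 (V x) ^ n) := by
        rw [one_mul]
        gcongr
        exact abs_eval_le_gaussNorm_mul hV hgn x
    _ ≤ V (x - α) * (((X - C α) * g).gaussNorm V 1 * max 1 (V x) ^ n) := by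
        rw [gaussNorm_mul hV one_pos, gaussNorm_X_sub_C]
        gcongr
        exact le_max_left _ _
    _ = _ := (mul_assoc _ _ _).symm

lemma max_one_le_max_one_of_sub_le_one (hV : IsNonarchimedean V) {x y : E}
    (h : V (x - y) ≤ 1) : max 1 (V y) ≤ max 1 (V x) := by
  have hy := isNonarchimedean_sub_le hV x (x - y)
  rw [sub_sub_cancel] at hy
  exact max_le (le_max_left _ _)
    (hy.trans (max_le (le_max_right _ _) (h.trans (le_max_left _ _))))

lemma pow_sub_one_div_le_rpow_sub_two_mul {d : ℕ} (hd : 0 < d) {B M : ℝ} (hB : 0 < B)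
    (hM : 1 ≤ M) : B ^ (d - 1) / B ≤ (B * M) ^ ((d : ℝ) - 2) * M :=
  calc B ^ (d - 1) / B = B ^ ((d : ℝ) - 2) := by
        rw [show (d : ℝ) - 2 = (d - 1 : ℕ) - 1 by push_cast [hd]; ring,
          Real.rpow_sub_one hB.ne', Real.rpow_natCast]
    _ ≤ B ^ ((d : ℝ) - 2) * M ^ ((d : ℝ) - 2 + 1) := by
        refine le_mul_of_one_le_right (by positivity) (Real.one_le_rpow hM ?_)
        have : (1 : ℝ) ≤ d := mod_cast hd
        linarith
    _ = (B * M) ^ ((d : ℝ) - 2) * M := by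
        rw [Real.mul_rpow hB.le (by positivity), mul_assoc, ← Real.rpow_add_one (by positivity)]

lemma exists_isRoot_abs_sub_le (hV : IsNonarchimedean V) {f : E[X]} (hf : f.Splits)
    (hdeg : 0 < f.natDegree) (hlead : 1 ≤ V f.leadingCoeff) (hdiscr : 1 ≤ V f.discr) {x : E}
    (hx : V (f.eval x) ≤ 1) :
    ∃ β, f.IsRoot β ∧
      V (x - β) ≤
        V (f.eval x) * f.gaussNorm V 1 ^ ((f.natDegree : ℝ) - 2) * max 1 (V x) := by
  classical
  have hsep : f.Separable := by
    rw [← discr_ne_zero_iff_separable hdeg, ← V.ne_zero_iff]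
    exact (one_pos.trans_le hdiscr).ne'
  obtain ⟨s, hs, hfs⟩ := exists_eq_C_mul_prod_X_sub_C hf hsep
  set a := f.leadingCoeff
  have ha : a ≠ 0 := V.ne_zero_iff.1 (one_pos.trans_le hlead).ne'
  obtain ⟨β, hβ, hdist, hle⟩ := exists_root_mul_le_of_one_le_discr hV ha
    (Finset.card_pos.1 (hs ▸ hdeg)) (hfs ▸ hdiscr) x
  rw [← hfs, hs] at hdist hle
  have hβx : V (x - β) ≤ 1 := by
    refine (pow_le_one_iff_of_nonneg (V.nonneg _) hdeg.ne').1 ?_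
    exact (le_mul_of_one_le_left (by positivity) hlead).trans (hdist.trans hx)
  have hgauss : f.gaussNorm V 1 = (V a * ∏ i ∈ s.erase β, max 1 (V i)) * max 1 (V β) := by
    rw [hfs, gaussNorm_C_mul_prod_X_sub_C hV,
      ← Finset.prod_erase_mul s (fun i ↦ max 1 (V i)) hβ, mul_assoc]
  refine ⟨β, ?_, ?_⟩
  · rw [IsRoot.def, hfs, eval_mul, eval_prod, Finset.prod_eq_zero hβ (by simp), mul_zero]
  set B := V a * ∏ i ∈ s.erase β, max 1 (V i)
  have hB : 0 < B := mul_pos (V.pos ha) (Finset.prod_pos fun _ _ ↦ by positivity)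
  have hG : 0 ≤ f.gaussNorm V 1 := f.gaussNorm_nonneg V zero_le_one
  calc V (x - β) ≤ V (f.eval x) * B ^ (f.natDegree - 1) / B := (le_div_iff₀ hB).2 hle
    _ ≤ V (f.eval x) * (f.gaussNorm V 1 ^ ((f.natDegree : ℝ) - 2) * max 1 (V β)) := by
        rw [hgauss, mul_div_assoc]
        gcongr
        exact pow_sub_one_div_le_rpow_sub_two_mul hdeg hB (le_max_left _ _)
    _ ≤ V (f.eval x) * (f.gaussNorm V 1 ^ ((f.natDegree : ℝ) - 2) * max 1 (V x)) := by
        gcongr V (f.eval x) * (_ * ?_)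
        exact max_one_le_max_one_of_sub_le_one hV hβx
    _ = _ := (mul_assoc _ _ _).symm

end Nonarchimedean

section Polynomial

lemma finite_setOf_natDegree_le_of_coeff_mem {R : Type*} [Semiring R] {S : Set R} (hS : S.Finite)
    (n : ℕ) : {P : R[X] | P.natDegree ≤ n ∧ ∀ i, P.coeff i ∈ S}.Finite := by
  have hpi : {g : Fin (n + 1) → R | ∀ i, g i ∈ S}.Finite := Set.Finite.pi' fun _ ↦ hS
  refine Set.Finite.of_finite_image (f := fun P (i : Fin (n + 1)) ↦ P.coeff i) (hpi.subset ?_) ?_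
  · rintro _ ⟨P, hP, rfl⟩ i
    exact hP.2 i
  · intro P hP Q hQ hPQ
    refine (Polynomial.ext_iff_natDegree_le hP.1 hQ.1).2 fun i hi ↦ ?_
    exact congrFun hPQ ⟨i, Nat.lt_succ_of_le hi⟩

lemma exists_eq_expand_pow_of_natDegree_pos {R : Type*} [CommRing R] [NoZeroDivisors R] (p : ℕ)
    [CharP R p] (hp : p.Prime) {f : R[X]} (hf : 0 < f.natDegree) :
    ∃ m g, f = expand R (p ^ m) g ∧ derivative g ≠ 0 := by
  induction hd : f.natDegree using Nat.strong_induction_on generalizing f with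
  | _ d ih =>
    by_cases hder : derivative f = 0
    · have hexp : expand R p (contract p f) = f := expand_contract p hder hp.ne_zero
      have hdeg : f.natDegree = (contract p f).natDegree * p := by
        rw [← natDegree_expand, hexp]
      have hpos : 0 < (contract p f).natDegree := Nat.pos_of_mul_pos_right (hdeg ▸ hf)
      obtain ⟨m, g, hg, hg'⟩ :=
        ih _ (by rw [← hd, hdeg]; exact lt_mul_of_one_lt_right hpos hp.one_lt) hpos rfl
      exact ⟨m + 1, g, by rw [pow_succ', ← expand_expand, ← hg, hexp], hg'⟩
    · exact ⟨0, f, by simp, hder⟩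

lemma exists_eq_sum_X_pow_mul_pow_expChar {R : Type*} [CommSemiring R] (p : ℕ) [ExpChar R p]
    [PerfectRing R p] (c : R[X]) :
    ∃ g : ℕ → R[X], c = ∑ i ∈ Finset.range p, X ^ i * g i ^ p := by
  have hp : 0 < p := expChar_pos R p
  induction c using Polynomial.induction_on' with
  | add a b ha hb =>
    obtain ⟨g, hg⟩ := ha
    obtain ⟨h, hh⟩ := hb
    refine ⟨g + h, ?_⟩
    simp only [Pi.add_apply, add_pow_expChar, mul_add, Finset.sum_add_distrib, ← hg, ← hh]
  | monomial n a =>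
    obtain ⟨b, rfl⟩ := surjective_frobenius R p a
    refine ⟨Pi.single (n % p) (monomial (n / p) b), ?_⟩
    rw [Finset.sum_eq_single_of_mem (n % p) (Finset.mem_range.2 (n.mod_lt hp)) fun i _ hi ↦ by
      rw [Pi.single_eq_of_ne hi, zero_pow hp.ne', mul_zero], Pi.single_eq_same, monomial_pow,
      X_pow_mul_monomial, Nat.div_add_mod', frobenius_def]

lemma discr_map {R S : Type*} [CommRing R] [IsDomain R] [CommRing S] [IsDomain S] {σ : R →+* S}
    (hσ : Function.Injective σ) {f : R[X]} (hf : 0 < f.natDegree) :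
    (f.map σ).discr = σ f.discr := by
  have hdeg : (f.map σ).natDegree = f.natDegree := natDegree_map_eq_of_injective hσ f
  have hlead : σ f.leadingCoeff ≠ 0 :=
    (map_ne_zero_iff σ hσ).2 (leadingCoeff_ne_zero.2 (ne_zero_of_natDegree_gt hf))
  have hmap := resultant_map_map f (derivative f) f.natDegree (f.natDegree - 1) σ
  rw [resultant_deriv (natDegree_pos_iff_degree_pos.1 hf), ← derivative_map, ← hdeg,
    resultant_deriv (natDegree_pos_iff_degree_pos.1 (hdeg ▸ hf)), leadingCoeff_map_of_injective hσ,
    hdeg] at hmap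
  simp only [map_mul, map_pow, map_neg, map_one] at hmap
  exact mul_left_cancel₀ (mul_ne_zero (by simp) hlead) hmap

lemma discr_ne_zero_of_irreducible {R : Type*} [CommRing R] [IsDomain R] [IsGCDMonoid R]
    {f : R[X]} (hf : Irreducible f) (hder : derivative f ≠ 0) : f.discr ≠ 0 := by
  have hinj : Function.Injective (algebraMap R (FractionRing R)) := IsFractionRing.injective _ _
  have hdeg : 0 < f.natDegree :=
    Nat.pos_of_ne_zero fun h ↦ hder (derivative_of_natDegree_zero h)
  have hirr : Irreducible (f.map (algebraMap R (FractionRing R))) :=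
    ((hf.isPrimitive hdeg.ne').irreducible_iff_irreducible_map_fraction_map).1 hf
  have hsep : (f.map (algebraMap R (FractionRing R))).Separable := by
    rw [separable_iff_derivative_ne_zero hirr, derivative_map, Ne, Polynomial.map_eq_zero_iff hinj]
    exact hder
  have hdiscr := (discr_ne_zero_iff_separable
    (hdeg.trans_eq (natDegree_map_eq_of_injective hinj f).symm)).2 hsep
  rw [discr_map hinj hdeg] at hdiscr
  exact fun h ↦ hdiscr (by rw [h, map_zero])

end Polynomial

section LaurentSeries

section

variable {F : Type} [Field F]

lemma coeff_polyToK (c : F[X]) (m : ℤ) :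
    (polyToK F c).coeff m = if m ≤ 0 then c.coeff (-m).toNat else 0 := by
  induction c using Polynomial.induction_on' with
  | add a b ha hb =>
    rw [map_add, HahnSeries.coeff_add, ha, hb]
    split_ifs <;> simp
  | monomial d u =>
    have hmono : polyToK F (monomial d u) = HahnSeries.single (-(d : ℤ)) u := by
      simp [polyToK, TT, eval₂_monomial, HahnSeries.single_pow, HahnSeries.C_apply,
        HahnSeries.single_mul_single]
    rw [hmono, HahnSeries.coeff_single, coeff_monomial]
    split_ifs <;> first | rfl | omega

lemma polyToK_injective : Function.Injective (polyToK F) := by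
  refine (injective_iff_map_eq_zero _).2 fun c hc ↦ ?_
  ext i
  simpa [hc] using (coeff_polyToK c (-(i : ℤ))).symm

lemma order_polyToK {c : F[X]} (hc : c ≠ 0) : (polyToK F c).order = -(c.natDegree : ℤ) := by
  have hne : polyToK F c ≠ 0 := (map_ne_zero_iff _ polyToK_injective).2 hc
  refine le_antisymm (HahnSeries.order_le_of_coeff_ne_zero ?_) ?_
  · simpa [coeff_polyToK] using hc
  · by_contra! h
    refine HahnSeries.coeff_order_eq_zero.not.2 hne ?_
    rw [coeff_polyToK, if_pos (by omega)]
    exact coeff_eq_zero_of_natDegree_lt (by omega)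

end

variable {Fq}

lemma one_lt_card : 1 < (Fintype.card Fq : ℝ) := mod_cast Fintype.one_lt_card

lemma kabs_zero : kabs Fq 0 = 0 := if_pos rfl

lemma kabs_of_ne_zero {f : K Fq} (hf : f ≠ 0) :
    kabs Fq f = (Fintype.card Fq : ℝ) ^ (-f.order) := if_neg hf

lemma kabs_nonneg (f : K Fq) : 0 ≤ kabs Fq f := by
  unfold kabs
  split_ifs <;> positivity

lemma kabs_mul (f g : K Fq) : kabs Fq (f * g) = kabs Fq f * kabs Fq g := by
  rcases eq_or_ne f 0 with rfl | hf
  · simp [kabs_zero]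
  rcases eq_or_ne g 0 with rfl | hg
  · simp [kabs_zero]
  rw [kabs_of_ne_zero hf, kabs_of_ne_zero hg, kabs_of_ne_zero (mul_ne_zero hf hg),
    HahnSeries.order_mul hf hg, neg_add, zpow_add₀ (zero_lt_one.trans one_lt_card).ne']

lemma kabs_add_le_max (f g : K Fq) : kabs Fq (f + g) ≤ max (kabs Fq f) (kabs Fq g) := by
  rcases eq_or_ne f 0 with rfl | hf
  · simp
  rcases eq_or_ne g 0 with rfl | hg
  · simp
  rcases eq_or_ne (f + g) 0 with hfg | hfg
  · rw [hfg, kabs_zero]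
    exact le_max_of_le_left (kabs_nonneg f)
  have hq := (one_lt_card (Fq := Fq)).le
  rw [kabs_of_ne_zero hf, kabs_of_ne_zero hg, kabs_of_ne_zero hfg, le_max_iff]
  rcases min_le_iff.1 (HahnSeries.min_order_le_order_add hfg) with h | h
  · exact .inl (zpow_le_zpow_right₀ hq (neg_le_neg h))
  · exact .inr (zpow_le_zpow_right₀ hq (neg_le_neg h))

variable (Fq) in
/-- The absolute value `kabs` on `F_q((T⁻¹))`, bundled so that the general theory of
nonarchimedean absolute values applies to it. -/
def absK : AbsoluteValue (K Fq) ℝ where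
  toFun := kabs Fq
  map_mul' := kabs_mul
  nonneg' := kabs_nonneg
  eq_zero' f := by
    refine ⟨fun h ↦ by_contra fun hf ↦ ?_, fun h ↦ h ▸ kabs_zero⟩
    rw [kabs_of_ne_zero hf] at h
    exact (zpow_pos (zero_lt_one.trans one_lt_card) _).ne' h
  add_le' f g := (kabs_add_le_max f g).trans
    (max_le_add_of_nonneg (kabs_nonneg f) (kabs_nonneg g))

lemma absK_apply (f : K Fq) : absK Fq f = kabs Fq f := rfl

lemma isNonarchimedean_absK : IsNonarchimedean (absK Fq) := kabs_add_le_max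

lemma kabs_pos {f : K Fq} : 0 < kabs Fq f ↔ f ≠ 0 := (absK Fq).pos_iff

lemma kabs_polyToK {c : Fq[X]} (hc : c ≠ 0) :
    kabs Fq (polyToK Fq c) = (Fintype.card Fq : ℝ) ^ c.natDegree := by
  rw [kabs_of_ne_zero ((map_ne_zero_iff _ polyToK_injective).2 hc), order_polyToK hc, neg_neg,
    zpow_natCast]

lemma one_le_kabs_polyToK {c : Fq[X]} (hc : c ≠ 0) : 1 ≤ kabs Fq (polyToK Fq c) := by
  rw [kabs_polyToK hc]
  exact one_le_pow₀ one_lt_card.le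

lemma exists_kabs_sub_polyToK_lt_one (f : K Fq) : ∃ a : Fq[X], kabs Fq (f - polyToK Fq a) < 1 := by
  obtain ⟨a, ha⟩ : ∃ a : Fq[X], ∀ i : ℕ, a.coeff i = f.coeff (-(i : ℤ)) := by
    refine ⟨∑ i ∈ Finset.range ((-f.order).toNat + 1), monomial i (f.coeff (-(i : ℤ))),
      fun i ↦ ?_⟩
    simp only [finsetSum_coeff, coeff_monomial, Finset.sum_ite_eq', Finset.mem_range]
    split_ifs with h
    · rfl
    · exact (HahnSeries.coeff_eq_zero_of_lt_order (by omega)).symm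
  refine ⟨a, ?_⟩
  rcases eq_or_ne (f - polyToK Fq a) 0 with h | hne
  · simp [h, kabs_zero]
  rw [kabs_of_ne_zero hne]
  refine zpow_lt_one_of_neg₀ one_lt_card (neg_lt_zero.2 ?_)
  by_contra! h
  refine HahnSeries.coeff_order_eq_zero.not.2 hne ?_
  rw [HahnSeries.coeff_sub, coeff_polyToK, if_pos h, ha, sub_eq_zero]
  congr 1
  omega

lemma finite_setOf_kabs_polyToK_le (B : ℝ) : {c : Fq[X] | kabs Fq (polyToK Fq c) ≤ B}.Finite := by
  obtain ⟨N, hN⟩ := pow_unbounded_of_one_lt B (one_lt_card (Fq := Fq))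
  refine (finite_setOf_natDegree_le_of_coeff_mem Set.finite_univ N).subset
    fun c (hc : kabs Fq (polyToK Fq c) ≤ B) ↦ ⟨?_, fun i ↦ Set.mem_univ _⟩
  rcases eq_or_ne c 0 with rfl | hne
  · simp
  rw [kabs_polyToK hne] at hc
  exact ((pow_lt_pow_iff_right₀ one_lt_card).1 (hc.trans_lt hN)).le

/- The summands have distinct absolute values, since their orders are distinct modulo `p`. -/
lemma kabs_pow_le_kabs_sum_X_pow_mul_pow (x : ℕ → K Fq) {p i : ℕ} (hi : i < p) :
    kabs Fq (x i) ^ p ≤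
      kabs Fq (∑ j ∈ Finset.range p, polyToK Fq X ^ j * x j ^ p) := by
  have habs (j : ℕ) : kabs Fq (polyToK Fq X ^ j * x j ^ p) =
      (Fintype.card Fq : ℝ) ^ j * kabs Fq (x j) ^ p := by
    simp only [← absK_apply, map_mul, map_pow]
    rw [absK_apply, kabs_polyToK X_ne_zero, natDegree_X, pow_one]
  have hzpow (j : ℕ) (hj : x j ≠ 0) : kabs Fq (polyToK Fq X ^ j * x j ^ p) =
      (Fintype.card Fq : ℝ) ^ ((j : ℤ) - (x j).order * p) := by
    rw [habs, kabs_of_ne_zero hj, ← zpow_natCast, ← zpow_natCast, ← zpow_mul,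
      ← zpow_add₀ (zero_lt_one.trans one_lt_card).ne', neg_mul, sub_eq_add_neg]
  have hdistinct : ∀ j ∈ Finset.range p, ∀ l ∈ Finset.range p, j ≠ l →
      polyToK Fq X ^ j * x j ^ p ≠ 0 →
      absK Fq (polyToK Fq X ^ j * x j ^ p) ≠ absK Fq (polyToK Fq X ^ l * x l ^ p) := by
    intro j hj l hl hjl hne heq
    rw [Finset.mem_range] at hj hl
    have hx {m : ℕ} (h : polyToK Fq X ^ m * x m ^ p ≠ 0) : x m ≠ 0 :=
      ne_zero_pow (by omega) (right_ne_zero_of_mul h)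
    have hne' := (absK Fq).pos_iff.1 (heq ▸ (absK Fq).pos hne)
    rw [absK_apply, absK_apply, hzpow j (hx hne), hzpow l (hx hne')] at heq
    have hmod := congrArg (· % (p : ℤ))
      (zpow_right_injective₀ (zero_lt_one.trans one_lt_card) one_lt_card.ne' heq)
    simp only [Int.sub_mul_emod_self_right] at hmod
    exact hjl (Nat.ModEq.eq_of_lt_of_lt (Int.natCast_modEq_iff.1 hmod) hj hl)
  calc kabs Fq (x i) ^ p ≤ kabs Fq (polyToK Fq X ^ i * x i ^ p) := by
        rw [habs]
        exact le_mul_of_one_le_left (pow_nonneg (kabs_nonneg _) _) (one_le_pow₀ one_lt_card.le)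
    _ ≤ _ := le_apply_sum_of_pairwise_ne isNonarchimedean_absK hdistinct (Finset.mem_range.2 hi)

end LaurentSeries

section Infinite

open Topology

variable {ι : Type*} {s t : Set ι} {H : ι → ℝ}

lemma tendsto_atTop_cofinite_inf_principal (h : ∀ B, {i ∈ s | H i ≤ B}.Finite) :
    Tendsto H (cofinite ⊓ 𝓟 s) atTop := by
  refine tendsto_atTop.2 fun B ↦ eventually_inf_principal.2 ?_
  filter_upwards [(h B).eventually_cofinite_notMem] with i hi his
  exact (not_le.1 fun hle ↦ hi ⟨his, hle⟩).le

lemma infinite_sep_of_eventually (ht : t.Infinite) {q : ι → Prop}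
    (hq : ∀ᶠ i in cofinite ⊓ 𝓟 s, q i) (hts : t ⊆ s) : {i ∈ t | q i}.Infinite := by
  refine frequently_cofinite_iff_infinite.1 ((frequently_cofinite_iff_infinite.2 ht).mp ?_)
  filter_upwards [eventually_inf_principal.1 hq] with i hi hit
  exact ⟨hit, hi (hts hit)⟩

lemma eventually_mul_rpow_lt_rpow {l : Filter ι} (hH : Tendsto H l atTop) {a b : ℝ} (hab : a < b)
    (c : ℝ) : ∀ᶠ i in l, c * H i ^ a < H i ^ b := by
  have hgrowth := (tendsto_rpow_atTop (sub_pos.2 hab)).comp hH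
  filter_upwards [hgrowth.eventually_gt_atTop c, hH.eventually_gt_atTop 0] with i hi hpos
  calc c * H i ^ a < H i ^ (b - a) * H i ^ a := by gcongr; exact hi
    _ = H i ^ b := by rw [← Real.rpow_add hpos, sub_add_cancel]

lemma infinite_of_tendsto_zero {A : Set ι} {d : ι → ℝ} {κ : Type*} {l : Filter κ} [l.NeBot]
    {ε : κ → ℝ} (hε : Tendsto ε l (𝓝 0)) (h : ∀ᶠ j in l, ∃ i ∈ A, 0 < d i ∧ d i ≤ ε j) :
    A.Infinite := by
  intro hA
  have hsep : ∀ᶠ j in l, ∀ i ∈ A, 0 < d i → ε j < d i := by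
    refine (eventually_all_finite hA).2 fun i _ ↦ ?_
    rcases lt_or_ge 0 (d i) with hi | hi
    · filter_upwards [hε.eventually_lt_const hi] with j hj _ using hj
    · exact .of_forall fun j h ↦ absurd h hi.not_gt
  obtain ⟨j, ⟨i, hiA, hi, hle⟩, hj⟩ := (h.and hsep).exists
  exact (hj i hiA hi).not_ge hle

end Infinite

section Height

variable {Fq}

lemma Hpoly_eq_gaussNorm {E : Type*} [Field E] {V : AbsoluteValue E ℝ} {σ : Fq[X] →+* E}
    (hσ : ∀ c, V (σ c) = kabs Fq (polyToK Fq c)) (P : Fq[X][X]) :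
    Hpoly Fq P = (P.map σ).gaussNorm V 1 := by
  have hle (i : ℕ) : kabs Fq (polyToK Fq (P.coeff i)) ≤ (P.map σ).gaussNorm V 1 := by
    simpa [hσ] using (P.map σ).le_gaussNorm V zero_le_one i
  refine le_antisymm (ciSup_le hle) ?_
  obtain ⟨i, hi⟩ := (P.map σ).exists_eq_gaussNorm V 1
  rw [hi, coeff_map, hσ, one_pow, mul_one]
  exact le_ciSup (f := fun i ↦ kabs Fq (polyToK Fq (P.coeff i)))
    ⟨_, Set.forall_mem_range.2 hle⟩ i

lemma Hpoly_eq_gaussNorm_absK (P : Fq[X][X]) :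
    Hpoly Fq P = (P.map (polyToK Fq)).gaussNorm (absK Fq) 1 :=
  Hpoly_eq_gaussNorm (fun _ ↦ rfl) P

lemma kabs_coeff_le_Hpoly (P : Fq[X][X]) (i : ℕ) :
    kabs Fq (polyToK Fq (P.coeff i)) ≤ Hpoly Fq P := by
  rw [Hpoly_eq_gaussNorm_absK]
  simpa [absK_apply] using (P.map (polyToK Fq)).le_gaussNorm (absK Fq) zero_le_one i

lemma exists_kabs_coeff_eq_Hpoly (P : Fq[X][X]) :
    ∃ i, kabs Fq (polyToK Fq (P.coeff i)) = Hpoly Fq P := by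
  obtain ⟨i, hi⟩ := (P.map (polyToK Fq)).exists_eq_gaussNorm (absK Fq) 1
  refine ⟨i, ?_⟩
  rw [Hpoly_eq_gaussNorm_absK, hi, one_pow, mul_one, coeff_map, absK_apply]

lemma one_le_Hpoly {P : Fq[X][X]} (hP : P ≠ 0) : 1 ≤ Hpoly Fq P :=
  (one_le_kabs_polyToK (leadingCoeff_ne_zero.2 hP)).trans (kabs_coeff_le_Hpoly P P.natDegree)

lemma Hpoly_pos {P : Fq[X][X]} (hP : P ≠ 0) : 0 < Hpoly Fq P :=
  zero_lt_one.trans_le (one_le_Hpoly hP)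

lemma Hpoly_C_mul_X_add_C (a b : Fq[X]) :
    Hpoly Fq (C a * X + C b) = max (kabs Fq (polyToK Fq a)) (kabs Fq (polyToK Fq b)) := by
  set P : Fq[X][X] := C a * X + C b
  have h0 : P.coeff 0 = b := by simp [P]
  have h1 : P.coeff 1 = a := by simp [P]
  refine le_antisymm (ciSup_le fun i ↦ ?_) (max_le ?_ ?_)
  · match i with
    | 0 => exact h0.symm ▸ le_max_right _ _
    | 1 => exact h1.symm ▸ le_max_left _ _
    | i + 2 =>
      rw [coeff_eq_zero_of_natDegree_lt (natDegree_linear_le.trans_lt (by omega)), map_zero,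
        kabs_zero]
      exact (kabs_nonneg _).trans (le_max_left _ _)
  · rw [← h1]
    exact kabs_coeff_le_Hpoly P 1
  · rw [← h0]
    exact kabs_coeff_le_Hpoly P 0

lemma Hpoly_mul (P Q : Fq[X][X]) : Hpoly Fq (P * Q) = Hpoly Fq P * Hpoly Fq Q := by
  simp only [Hpoly_eq_gaussNorm_absK, Polynomial.map_mul]
  exact gaussNorm_mul isNonarchimedean_absK one_pos _ _

lemma Hpoly_le_of_dvd {P Q : Fq[X][X]} (h : P ∣ Q) (hQ : Q ≠ 0) : Hpoly Fq P ≤ Hpoly Fq Q := by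
  obtain ⟨R, rfl⟩ := h
  rw [Hpoly_mul]
  exact le_mul_of_one_le_right (Hpoly_pos (left_ne_zero_of_mul hQ)).le
    (one_le_Hpoly (right_ne_zero_of_mul hQ))

lemma Hpoly_eq_of_associated {P Q : Fq[X][X]} (h : Associated P Q) (hP : P ≠ 0) :
    Hpoly Fq P = Hpoly Fq Q :=
  (Hpoly_le_of_dvd h.dvd (h.ne_zero_iff.1 hP)).antisymm (Hpoly_le_of_dvd h.symm.dvd hP)

lemma Hpoly_expand {m : ℕ} (hm : 0 < m) (P : Fq[X][X]) : Hpoly Fq (expand _ m P) = Hpoly Fq P := by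
  refine le_antisymm (ciSup_le fun i ↦ ?_) (ciSup_le fun i ↦ ?_)
  · rw [coeff_expand hm]
    split_ifs
    · exact kabs_coeff_le_Hpoly P _
    · rw [map_zero, kabs_zero]
      exact (kabs_nonneg _).trans (kabs_coeff_le_Hpoly P 0)
  · rw [← coeff_expand_mul hm]
    exact kabs_coeff_le_Hpoly _ _

lemma finite_setOf_natDegree_le_Hpoly_le (n : ℕ) (B : ℝ) :
    {P : Fq[X][X] | P.natDegree ≤ n ∧ Hpoly Fq P ≤ B}.Finite :=
  (finite_setOf_natDegree_le_of_coeff_mem (finite_setOf_kabs_polyToK_le B) n).subset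
    fun P hP ↦ ⟨hP.1, fun i ↦ (kabs_coeff_le_Hpoly P i).trans hP.2⟩

lemma tendsto_Hpoly_atTop (n : ℕ) :
    Tendsto (Hpoly Fq) (cofinite ⊓ 𝓟 {P : Fq[X][X] | P.natDegree ≤ n}) atTop :=
  tendsto_atTop_cofinite_inf_principal (finite_setOf_natDegree_le_Hpoly_le n)

lemma kabs_evalK_mul (P Q : Fq[X][X]) (ξ : K Fq) :
    kabs Fq (evalK Fq (P * Q) ξ) = kabs Fq (evalK Fq P ξ) * kabs Fq (evalK Fq Q ξ) := by
  rw [evalK, eval₂_mul, kabs_mul]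
  rfl

lemma ne_zero_of_kabs_evalK_pos {P : Fq[X][X]} {ξ : K Fq} (h : 0 < kabs Fq (evalK Fq P ξ)) :
    P ≠ 0 := by
  rintro rfl
  simp [evalK, kabs_zero] at h

lemma one_le_kabs_evalK_of_natDegree_eq_zero {P : Fq[X][X]} (hP : P ≠ 0) (hdeg : P.natDegree = 0)
    (ξ : K Fq) : 1 ≤ kabs Fq (evalK Fq P ξ) := by
  rw [eq_C_of_natDegree_eq_zero hdeg] at hP ⊢
  rw [evalK, eval₂_C]
  exact one_le_kabs_polyToK (C_ne_zero.1 hP)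

end Height

section WExp

variable {Fq} {n : ℕ} {ξ : K Fq} {w : ℝ}

lemma coe_le_wExp {c : ℝ} (h : {P : Fq[X][X] | P.natDegree ≤ n ∧ 0 < kabs Fq (evalK Fq P ξ) ∧
    kabs Fq (evalK Fq P ξ) ≤ c * Hpoly Fq P ^ (-w)}.Infinite) : (w : EReal) ≤ wExp Fq n ξ := by
  refine EReal.ge_of_forall_gt_iff_ge.1 fun u hu ↦ le_sSup ⟨u, rfl, ?_⟩
  have hHeight := eventually_mul_rpow_lt_rpow (tendsto_Hpoly_atTop (Fq := Fq) n)
    (neg_lt_neg (EReal.coe_lt_coe_iff.1 hu)) c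
  refine (infinite_sep_of_eventually h hHeight fun P hP ↦ hP.1).mono ?_
  rintro P ⟨⟨hdeg, hpos, hle⟩, hle'⟩
  exact ⟨hdeg, hpos, hle.trans hle'.le⟩

variable (n ξ w) in
/-- The non-constant irreducible polynomials among those counted by `wExp`: the `P` of degree at
most `n` with `0 < |P(ξ)| ≤ H(P)^{-w}`. -/
def irreducibleApproximants : Set Fq[X][X] :=
  {P | Irreducible P ∧ 0 < P.natDegree ∧ P.natDegree ≤ n ∧ 0 < kabs Fq (evalK Fq P ξ) ∧
    kabs Fq (evalK Fq P ξ) ≤ Hpoly Fq P ^ (-w)}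

lemma Hpoly_rpow_neg_le_one (hw : 0 ≤ w) {P : Fq[X][X]} (hP : P ≠ 0) : Hpoly Fq P ^ (-w) ≤ 1 :=
  Real.rpow_le_one_of_one_le_of_nonpos (one_le_Hpoly hP) (neg_nonpos.2 hw)

lemma pow_mul_Hpoly_rpow_le_kabs_evalK {c : ℝ} (hc0 : 0 ≤ c) (hc1 : c ≤ 1) (hw : 0 ≤ w)
    (hirr : ∀ P : Fq[X][X], Irreducible P → 0 < P.natDegree → P.natDegree ≤ n →
      0 < kabs Fq (evalK Fq P ξ) → c * Hpoly Fq P ^ (-w) ≤ kabs Fq (evalK Fq P ξ))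
    {P : Fq[X][X]} (hdeg : P.natDegree ≤ n) (hP : 0 < kabs Fq (evalK Fq P ξ)) :
    c ^ P.natDegree * Hpoly Fq P ^ (-w) ≤ kabs Fq (evalK Fq P ξ) := by
  have hconst {P : Fq[X][X]} (hP : P ≠ 0) (hdeg : P.natDegree = 0) :
      c ^ P.natDegree * Hpoly Fq P ^ (-w) ≤ kabs Fq (evalK Fq P ξ) := by
    rw [hdeg, pow_zero, one_mul]
    exact (Hpoly_rpow_neg_le_one hw hP).trans (one_le_kabs_evalK_of_natDegree_eq_zero hP hdeg ξ)
  induction P using WfDvdMonoid.induction_on_irreducible with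
  | zero => exact absurd rfl (ne_zero_of_kabs_evalK_pos hP)
  | unit u hu => exact hconst hu.ne_zero (natDegree_eq_zero_of_isUnit hu)
  | mul a i ha hi ih =>
    have hdeg_mul : (i * a).natDegree = i.natDegree + a.natDegree := natDegree_mul hi.ne_zero ha
    rw [kabs_evalK_mul] at hP ⊢
    have hPi : 0 < kabs Fq (evalK Fq i ξ) := pos_of_mul_pos_left hP (kabs_nonneg _)
    have hPa : 0 < kabs Fq (evalK Fq a ξ) := pos_of_mul_pos_right hP (kabs_nonneg _)
    have hfactor : c ^ i.natDegree * Hpoly Fq i ^ (-w) ≤ kabs Fq (evalK Fq i ξ) := by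
      rcases i.natDegree.eq_zero_or_pos with h | h
      · exact hconst hi.ne_zero h
      · refine le_trans ?_ (hirr i hi h (by omega) hPi)
        have := (Hpoly_pos hi.ne_zero).le
        gcongr
        exact pow_le_of_le_one hc0 hc1 h.ne'
    calc c ^ (i * a).natDegree * Hpoly Fq (i * a) ^ (-w)
        = (c ^ i.natDegree * Hpoly Fq i ^ (-w)) * (c ^ a.natDegree * Hpoly Fq a ^ (-w)) := by
          rw [hdeg_mul, pow_add, Hpoly_mul,
            Real.mul_rpow (Hpoly_pos hi.ne_zero).le (Hpoly_pos ha).le]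
          ring
      _ ≤ _ := mul_le_mul hfactor (ih (by omega) hPa)
          (mul_nonneg (pow_nonneg hc0 _) (Real.rpow_nonneg (Hpoly_pos ha).le _)) hPi.le

lemma exists_pos_le_kabs_evalK_of_finite {S : Set Fq[X][X]} (hS : S.Finite)
    (hpos : ∀ P ∈ S, 0 < kabs Fq (evalK Fq P ξ)) :
    ∃ c : ℝ, 0 < c ∧ c ≤ 1 ∧ ∀ P ∈ S, c ≤ kabs Fq (evalK Fq P ξ) := by
  have hsmall := (eventually_all_finite hS).2 fun P hP ↦ Ioc_mem_nhdsGT (hpos P hP)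
  obtain ⟨c, hcS, hc⟩ := (hsmall.and (Ioc_mem_nhdsGT one_pos)).exists
  exact ⟨c, hc.1, hc.2, fun P hP ↦ (hcS P hP).2⟩

lemma infinite_irreducibleApproximants (hw : 0 ≤ w) (h : (w : EReal) < wExp Fq n ξ) :
    (irreducibleApproximants n ξ w).Infinite := by
  intro hfin
  obtain ⟨_, ⟨w', rfl, hinf⟩, hlt⟩ := lt_sSup_iff.1 h
  obtain ⟨c, hc0, hc1, hc⟩ := exists_pos_le_kabs_evalK_of_finite hfin fun P hP ↦ hP.2.2.2.1
  have hirr (P : Fq[X][X]) (hP : Irreducible P) (h0 : 0 < P.natDegree) (hn : P.natDegree ≤ n)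
      (hpos : 0 < kabs Fq (evalK Fq P ξ)) : c * Hpoly Fq P ^ (-w) ≤ kabs Fq (evalK Fq P ξ) := by
    rcases le_or_gt (kabs Fq (evalK Fq P ξ)) (Hpoly Fq P ^ (-w)) with hle | hgt
    · exact (mul_le_of_le_one_right hc0.le (Hpoly_rpow_neg_le_one hw hP.ne_zero)).trans
        (hc P ⟨hP, h0, hn, hpos, hle⟩)
    · exact (mul_le_of_le_one_left (Real.rpow_nonneg (Hpoly_pos hP.ne_zero).le _) hc1).trans hgt.le
  have hHeight := eventually_mul_rpow_lt_rpow (tendsto_Hpoly_atTop (Fq := Fq) n)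
    (neg_lt_neg (EReal.coe_lt_coe_iff.1 hlt)) (c ^ n)⁻¹
  obtain ⟨P, ⟨hdeg, hpos, hle⟩, hP⟩ :=
    (infinite_sep_of_eventually hinf hHeight fun P hP ↦ hP.1).nonempty
  refine hP.not_ge ?_
  rw [← div_eq_inv_mul, le_div_iff₀' (by positivity)]
  calc c ^ n * Hpoly Fq P ^ (-w) ≤ c ^ P.natDegree * Hpoly Fq P ^ (-w) := by
        have := (Hpoly_pos (ne_zero_of_kabs_evalK_pos hpos)).le
        gcongr ?_ * _
        exact pow_le_pow_of_le_one hc0.le hc1 hdeg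
    _ ≤ kabs Fq (evalK Fq P ξ) := pow_mul_Hpoly_rpow_le_kabs_evalK hc0.le hc1 hw hirr hdeg hpos
    _ ≤ Hpoly Fq P ^ (-w') := hle

end WExp

section MinimalPolynomial

lemma exists_irreducible_dvd_map_eq_zero {R S : Type*} [CommMonoidWithZero R]
    [IsCancelMulZero R] [WfDvdMonoid R] [MonoidWithZero S] [NoZeroDivisors S] [Nontrivial S]
    (σ : R →*₀ S) {x : R} (hx : x ≠ 0) (h : σ x = 0) : ∃ y, Irreducible y ∧ y ∣ x ∧ σ y = 0 := by
  induction x using WfDvdMonoid.induction_on_irreducible with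
  | zero => exact absurd rfl hx
  | unit u hu => exact absurd h (hu.map σ).ne_zero
  | mul a i ha hi ih =>
    rw [map_mul, mul_eq_zero] at h
    rcases h with h | h
    · exact ⟨i, hi, dvd_mul_right i a, h⟩
    · obtain ⟨y, hy, hya, hy0⟩ := ih ha h
      exact ⟨y, hy, hya.mul_left i, hy0⟩

lemma associated_of_irreducible_of_eval₂_eq_zero {R E : Type*} [CommRing R] [IsDomain R]
    [IsGCDMonoid R] [Field E] {σ : R →+* E} (hσ : Function.Injective σ) {P Q : R[X]}
    {α : E} (hP : Irreducible P) (hQ : Irreducible Q) (hPα : P.eval₂ σ α = 0)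
    (hQα : Q.eval₂ σ α = 0) : Associated P Q := by
  have hprim {S : R[X]} (hS : Irreducible S) (hSα : S.eval₂ σ α = 0) : S.IsPrimitive :=
    hS.isPrimitive (natDegree_pos_of_eval₂_root hS.ne_zero σ hSα
      fun x ↦ (map_eq_zero_iff σ hσ).1).ne'
  refine (hP.dvd_irreducible_iff_associated hQ).1
    (((hprim hP hPα).dvd_iff_fraction_map_dvd_fraction_map (FractionRing R)).2 ?_)
  by_contra hnd
  obtain ⟨a, b, hab⟩ := (((hprim hP hPα).irreducible_iff_irreducible_map_fraction_map
    (K := FractionRing R)).1 hP).coprime_iff_not_dvd.2 hnd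
  have hlift : (IsFractionRing.lift hσ : FractionRing R →+* E).comp (algebraMap R _) = σ :=
    RingHom.ext fun x ↦ IsFractionRing.lift_algebraMap hσ x
  have heval := congrArg (eval₂ (IsFractionRing.lift hσ) α) hab
  simp only [eval₂_add, eval₂_mul, eval₂_map, hlift, hPα, hQα, mul_zero, add_zero,
    eval₂_one, zero_ne_one] at heval

end MinimalPolynomial

section AlgebraicElement

section

variable {F : Type} [Field F] {P : F[X][X]} {α : L F}

lemma φ_injective : Function.Injective (φ F) :=
  (algebraMap (K F) (L F)).injective.comp polyToK_injective

lemma evalL_toL (P : F[X][X]) (ξ : K F) : evalL F P (toL F ξ) = toL F (evalK F P ξ) :=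
  (hom_eval₂ P (polyToK F) (toL F) ξ).symm

lemma evalL_eq_eval_map (P : F[X][X]) (α : L F) : evalL F P α = (P.map (φ F)).eval α :=
  eval₂_eq_eval_map _

lemma natDegree_pos_of_evalL_eq_zero (hP : P ≠ 0) (h : evalL F P α = 0) : 0 < P.natDegree :=
  natDegree_pos_of_eval₂_root hP _ h fun _ ↦ (map_eq_zero_iff _ φ_injective).1

lemma isMinPolyOf_minPolyPrim (h : IsAlgElem F α) : IsMinPolyOf F (minPolyPrim F α) α := by
  rw [minPolyPrim, dif_pos h]
  exact h.choose_spec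

lemma isAlgElem_of_irreducible (hP : Irreducible P) (h : evalL F P α = 0) : IsAlgElem F α := by
  set c := P.leadingCoeff.leadingCoeff
  have hc : c ≠ 0 := leadingCoeff_ne_zero.2 (leadingCoeff_ne_zero.2 hP.ne_zero)
  have hunit : IsUnit (C (C c⁻¹) : F[X][X]) :=
    isUnit_C.2 (isUnit_C.2 (isUnit_iff_ne_zero.2 (inv_ne_zero hc)))
  have hirr : Irreducible (P * C (C c⁻¹)) := (irreducible_mul_isUnit hunit).2 hP
  have hroot : evalL F (P * C (C c⁻¹)) α = 0 := by
    rw [evalL, eval₂_mul, ← evalL, h, zero_mul]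
  have hdeg := natDegree_pos_of_evalL_eq_zero hirr.ne_zero hroot
  refine ⟨_, hdeg, hirr, hirr.isPrimitive hdeg.ne', ?_, hroot⟩
  rw [Monic, leadingCoeff_mul, leadingCoeff_mul, leadingCoeff_C, leadingCoeff_C]
  exact mul_inv_cancel₀ hc

lemma associated_minPolyPrim (hP : Irreducible P) (h : evalL F P α = 0) :
    Associated (minPolyPrim F α) P := by
  obtain ⟨_, hirr, _, _, hroot⟩ := isMinPolyOf_minPolyPrim (isAlgElem_of_irreducible hP h)
  exact associated_of_irreducible_of_eval₂_eq_zero φ_injective hirr hP hroot h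

lemma degAlg_eq_natDegree (hP : Irreducible P) (h : evalL F P α = 0) :
    degAlg F α = P.natDegree :=
  natDegree_eq_of_degree_eq (degree_eq_degree_of_associated (associated_minPolyPrim hP h))

lemma finite_setOf_evalL_eq_zero (hP : P ≠ 0) : {α : L F | evalL F P α = 0}.Finite := by
  simp only [evalL_eq_eval_map]
  exact finite_setOfPred_isRoot ((Polynomial.map_ne_zero_iff φ_injective).2 hP)

lemma finite_setOf_minPolyPrim_mem {S : Set F[X][X]} (hS : S.Finite) :
    {α : L F | IsAlgElem F α ∧ minPolyPrim F α ∈ S}.Finite := by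
  refine ((hS.sep (· ≠ 0)).biUnion fun P hP ↦ finite_setOf_evalL_eq_zero hP.2).subset ?_
  rintro α ⟨hα, hmem⟩
  obtain ⟨-, hirr, -, -, hroot⟩ := isMinPolyOf_minPolyPrim hα
  exact Set.mem_biUnion ⟨hmem, hirr.ne_zero⟩ hroot

lemma infinite_image_minPolyPrim {A : Set (L F)} (hA : A.Infinite)
    (halg : ∀ α ∈ A, IsAlgElem F α) : (minPolyPrim F '' A).Infinite :=
  fun hfin ↦ hA ((finite_setOf_minPolyPrim_mem hfin).subset
    fun α hα ↦ ⟨halg α hα, Set.mem_image_of_mem _ hα⟩)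

end

variable {Fq} {P : Fq[X][X]} {α : L Fq}

lemma heightAlg_eq_Hpoly (hP : Irreducible P) (h : evalL Fq P α = 0) :
    heightAlg Fq α = Hpoly Fq P := by
  have hassoc := associated_minPolyPrim hP h
  exact Hpoly_eq_of_associated hassoc (hassoc.ne_zero_iff.2 hP.ne_zero)

lemma isAlgElem_and_degAlg_le_and_heightAlg_le (hP : P ≠ 0) (h : evalL Fq P α = 0) :
    IsAlgElem Fq α ∧ degAlg Fq α ≤ P.natDegree ∧ heightAlg Fq α ≤ Hpoly Fq P := by
  obtain ⟨Q, hQ, hdvd, hroot⟩ := exists_irreducible_dvd_map_eq_zero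
    (eval₂RingHom (φ Fq) α).toMonoidWithZeroHom hP h
  refine ⟨isAlgElem_of_irreducible hQ hroot, ?_, ?_⟩
  · rw [degAlg_eq_natDegree hQ hroot]
    exact natDegree_le_of_dvd hdvd hP
  · rw [heightAlg_eq_Hpoly hQ hroot]
    exact Hpoly_le_of_dvd hdvd hP

lemma one_le_heightAlg (hα : IsAlgElem Fq α) : 1 ≤ heightAlg Fq α :=
  one_le_Hpoly (isMinPolyOf_minPolyPrim hα).2.1.ne_zero

lemma tendsto_heightAlg_atTop (n : ℕ) :
    Tendsto (heightAlg Fq) (cofinite ⊓ 𝓟 {α : L Fq | IsAlgElem Fq α ∧ degAlg Fq α ≤ n}) atTop :=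
  tendsto_atTop_cofinite_inf_principal fun B ↦
    (finite_setOf_minPolyPrim_mem (finite_setOf_natDegree_le_Hpoly_le n B)).subset
      fun _ hα ↦ ⟨hα.1.1, hα.1.2, hα.2⟩

end AlgebraicElement

section AbsoluteValueExtension

variable {Fq} {v : L Fq → ℝ} {n : ℕ} {ξ : K Fq} {w : ℝ}

namespace IsAbsExt

/-- An extension to the algebraic closure of the absolute value on `F_q((T⁻¹))`, bundled as a
Mathlib absolute value. -/
def absoluteValue (hv : IsAbsExt Fq v) : AbsoluteValue (L Fq) ℝ where
  toFun := v
  map_mul' := hv.map_mul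
  nonneg' := hv.nonneg
  eq_zero' := hv.eq_zero_iff
  add_le' x y := (hv.add_le x y).trans (max_le_add_of_nonneg (hv.nonneg x) (hv.nonneg y))

lemma absoluteValue_apply (hv : IsAbsExt Fq v) (x : L Fq) : hv.absoluteValue x = v x := rfl

lemma isNonarchimedean_absoluteValue (hv : IsAbsExt Fq v) : IsNonarchimedean hv.absoluteValue :=
  hv.add_le

lemma Hpoly_eq_gaussNorm (hv : IsAbsExt Fq v) (P : Fq[X][X]) :
    Hpoly Fq P = (P.map (φ Fq)).gaussNorm hv.absoluteValue 1 :=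
  Ooto.Hpoly_eq_gaussNorm (fun _ ↦ hv.extends_kabs _) P

lemma apply_evalL_toL (hv : IsAbsExt Fq v) (P : Fq[X][X]) (ξ : K Fq) :
    v (evalL Fq P (toL Fq ξ)) = kabs Fq (evalK Fq P ξ) := by
  rw [evalL_toL, hv.extends_kabs]

lemma kabs_evalK_le (hv : IsAbsExt Fq v) {P : Fq[X][X]} (hP : P.natDegree ≤ n) {α : L Fq}
    (hα : evalL Fq P α = 0) (ξ : K Fq) :
    kabs Fq (evalK Fq P ξ) ≤ v (toL Fq ξ - α) * Hpoly Fq P * max 1 (kabs Fq ξ) ^ n := by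
  rw [← hv.apply_evalL_toL, evalL_eq_eval_map, hv.Hpoly_eq_gaussNorm, ← hv.extends_kabs]
  rw [evalL_eq_eval_map] at hα
  exact abs_eval_le_abs_sub_mul_gaussNorm_mul hv.isNonarchimedean_absoluteValue
    (natDegree_map_le.trans hP) hα (toL Fq ξ)

end IsAbsExt

lemma coe_le_wStarExp {c : ℝ} (h : {α : L Fq | IsAlgElem Fq α ∧ degAlg Fq α ≤ n ∧
    0 < v (toL Fq ξ - α) ∧ v (toL Fq ξ - α) ≤ c * heightAlg Fq α ^ (-w - 1)}.Infinite) :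
    (w : EReal) ≤ wStarExp Fq v n ξ := by
  refine EReal.ge_of_forall_gt_iff_ge.1 fun u hu ↦ le_sSup ⟨u, rfl, ?_⟩
  have hHeight := eventually_mul_rpow_lt_rpow (tendsto_heightAlg_atTop (Fq := Fq) n)
    (sub_lt_sub_right (neg_lt_neg (EReal.coe_lt_coe_iff.1 hu)) 1) c
  refine (infinite_sep_of_eventually h hHeight fun α hα ↦ ⟨hα.1, hα.2.1⟩).mono ?_
  rintro α ⟨⟨halg, hdeg, hpos, hle⟩, hle'⟩
  exact ⟨halg, hdeg, hpos, hle.trans hle'.le⟩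

lemma wStarExp_mono (v : L Fq → ℝ) {m : ℕ} (hmn : m ≤ n) (ξ : K Fq) :
    wStarExp Fq v m ξ ≤ wStarExp Fq v n ξ := by
  refine sSup_le_sSup ?_
  rintro _ ⟨w, rfl, hw⟩
  exact ⟨w, rfl, hw.mono fun α hα ↦ ⟨hα.1, hα.2.1.trans hmn, hα.2.2⟩⟩

lemma wStarExp_le_wExp (hv : IsAbsExt Fq v) (n : ℕ) (ξ : K Fq) :
    wStarExp Fq v n ξ ≤ wExp Fq n ξ := by
  refine sSup_le ?_
  rintro _ ⟨w, rfl, hinf⟩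
  have hHeight := (tendsto_heightAlg_atTop (Fq := Fq) n).eventually_gt_atTop
    (heightAlg Fq (toL Fq ξ))
  refine coe_le_wExp (c := max 1 (kabs Fq ξ) ^ n) <| (infinite_image_minPolyPrim
    (infinite_sep_of_eventually hinf hHeight fun α hα ↦ ⟨hα.1, hα.2.1⟩)
      fun α hα ↦ hα.1.1).mono ?_
  rintro _ ⟨α, ⟨⟨halg, hdeg, -, hle⟩, hlt⟩, rfl⟩
  obtain ⟨-, hirr, -, -, hroot⟩ := isMinPolyOf_minPolyPrim halg
  refine ⟨hdeg, kabs_pos.2 fun h0 ↦ hlt.ne (heightAlg_eq_Hpoly hirr ?_), ?_⟩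
  · rw [evalL_toL, h0, map_zero]
  have hH : 0 < heightAlg Fq α := one_pos.trans_le (one_le_heightAlg halg)
  calc kabs Fq (evalK Fq (minPolyPrim Fq α) ξ)
      ≤ v (toL Fq ξ - α) * heightAlg Fq α * max 1 (kabs Fq ξ) ^ n := hv.kabs_evalK_le hdeg hroot ξ
    _ ≤ heightAlg Fq α ^ (-w - 1) * heightAlg Fq α * max 1 (kabs Fq ξ) ^ n := by gcongr
    _ = max 1 (kabs Fq ξ) ^ n * heightAlg Fq α ^ (-w) := by
        rw [Real.rpow_sub_one hH.ne', div_mul_cancel₀ _ hH.ne', mul_comm]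

lemma exists_kabs_sub_polyToK_eq_one (f : K Fq) : ∃ a, kabs Fq (f - polyToK Fq a) = 1 := by
  obtain ⟨a, ha⟩ := exists_kabs_sub_polyToK_lt_one f
  refine ⟨a + 1, ?_⟩
  rw [map_add, map_one, ← sub_sub, ← absK_apply]
  rw [sub_eq_add_neg, isNonarchimedean_absK.add_eq_right_of_lt] <;>
    simp [absK_apply, ha]

lemma exists_degAlg_le_one (hv : IsAbsExt Fq v) (ξ : K Fq) (m : ℕ) :
    ∃ α, IsAlgElem Fq α ∧ degAlg Fq α ≤ 1 ∧
      heightAlg Fq α ≤ (Fintype.card Fq : ℝ) ^ m * max 1 (kabs Fq ξ) ∧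
      v (toL Fq ξ - α) = ((Fintype.card Fq : ℝ) ^ m)⁻¹ := by
  obtain ⟨a, ha⟩ := exists_kabs_sub_polyToK_eq_one (polyToK Fq (X ^ m) * ξ)
  have hXm : kabs Fq (polyToK Fq (X ^ m)) = (Fintype.card Fq : ℝ) ^ m := by
    rw [kabs_polyToK (pow_ne_zero m X_ne_zero), natDegree_X_pow]
  have hqm : 1 ≤ (Fintype.card Fq : ℝ) ^ m := one_le_pow₀ one_lt_card.le
  have hT : polyToK Fq (X ^ m) ≠ 0 := kabs_pos.1 (hXm ▸ one_pos.trans_le hqm)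
  set B := (Fintype.card Fq : ℝ) ^ m * max 1 (kabs Fq ξ)
  have hqB : (Fintype.card Fq : ℝ) ^ m ≤ B :=
    le_mul_of_one_le_right (one_pos.trans_le hqm).le (le_max_left _ _)
  have haB : kabs Fq (polyToK Fq a) ≤ B := by
    have h := isNonarchimedean_sub_le isNonarchimedean_absK (polyToK Fq (X ^ m) * ξ)
      (polyToK Fq (X ^ m) * ξ - polyToK Fq a)
    rw [sub_sub_cancel, absK_apply, absK_apply, absK_apply, ha, kabs_mul, hXm] at h
    exact h.trans (max_le (by simp only [B]; gcongr; exact le_max_right _ _) (hqm.trans hqB))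
  set P : Fq[X][X] := C (X ^ m) * X + C (-a)
  have hP : P ≠ 0 :=
    ne_zero_of_natDegree_gt (natDegree_linear (pow_ne_zero m X_ne_zero)).symm.le
  have hPB : Hpoly Fq P ≤ B := by
    rw [Hpoly_C_mul_X_add_C, hXm, map_neg, ← absK_apply, (absK Fq).map_neg]
    exact max_le hqB haB
  have hroot : evalL Fq P (toL Fq (polyToK Fq a / polyToK Fq (X ^ m))) = 0 := by
    rw [evalL_toL, evalK]
    simp [P, -map_pow, mul_div_cancel₀ _ hT]
  obtain ⟨halg, hdeg, hheight⟩ := isAlgElem_and_degAlg_le_and_heightAlg_le hP hroot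
  refine ⟨_, halg, hdeg.trans natDegree_linear_le, hheight.trans hPB, ?_⟩
  rw [← map_sub, hv.extends_kabs]
  refine eq_inv_of_mul_eq_one_right ?_
  rw [← hXm, ← kabs_mul, mul_sub, mul_div_cancel₀ _ hT, ha]

lemma wStarExp_nonneg (hv : IsAbsExt Fq v) (hn : 1 ≤ n) (ξ : K Fq) : 0 ≤ wStarExp Fq v n ξ := by
  have hq : Tendsto (fun m : ℕ ↦ ((Fintype.card Fq : ℝ) ^ m)⁻¹) atTop (nhds 0) :=
    (tendsto_pow_atTop_atTop_of_one_lt one_lt_card).inv_tendsto_atTop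
  refine coe_le_wStarExp (w := 0) (c := max 1 (kabs Fq ξ))
    (infinite_of_tendsto_zero (d := fun α ↦ v (toL Fq ξ - α)) hq (.of_forall fun m ↦ ?_))
  obtain ⟨α, halg, hdeg, hheight, hdist⟩ := exists_degAlg_le_one hv ξ m
  have hqm : 0 < (Fintype.card Fq : ℝ) ^ m := pow_pos (one_pos.trans one_lt_card) m
  have hpos : 0 < v (toL Fq ξ - α) := hdist ▸ inv_pos.2 hqm
  refine ⟨α, ⟨halg, hdeg.trans hn, hpos, ?_⟩, hpos, hdist.le⟩
  rw [hdist, neg_zero, zero_sub, Real.rpow_neg_one, ← div_eq_mul_inv,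
    le_div_iff₀ (one_pos.trans_le (one_le_heightAlg halg)), inv_mul_le_iff₀ hqm]
  exact hheight

end AbsoluteValueExtension

section InseparableDegree

variable {Fq} {p : ℕ} [Fact p.Prime] [CharP Fq p] {v : L Fq → ℝ} {n : ℕ} {ξ : K Fq} {w : ℝ}

lemma IsAbsExt.exists_evalL_expand_eq_zero (hv : IsAbsExt Fq v) {R : Fq[X][X]} {m : ℕ}
    (hirr : Irreducible (expand _ (p ^ m) R)) (hder : derivative R ≠ 0)
    (hle : kabs Fq (evalK Fq (expand _ (p ^ m) R) ξ) ≤ 1) :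
    ∃ α, evalL Fq (expand _ (p ^ m) R) α = 0 ∧ v (toL Fq ξ - α) ^ p ^ m ≤
      kabs Fq (evalK Fq (expand _ (p ^ m) R) ξ) * Hpoly Fq R ^ ((R.natDegree : ℝ) - 2) *
        max 1 (kabs Fq ξ) ^ p ^ m := by
  have hp : 0 < p ^ m := pow_pos (Fact.out : p.Prime).pos m
  have hF : CharP (L Fq) p := charP_of_injective_ringHom φ_injective p
  have heval (α : L Fq) :
      evalL Fq (expand _ (p ^ m) R) α = (R.map (φ Fq)).eval (α ^ p ^ m) := by
    rw [evalL_eq_eval_map, map_expand, expand_eval]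
  have hR : Irreducible R := of_irreducible_expand hp.ne' hirr
  have hdeg : 0 < R.natDegree :=
    Nat.pos_of_ne_zero fun h ↦ hder (derivative_of_natDegree_zero h)
  have hφ (c : Fq[X]) : v (φ Fq c) = kabs Fq (polyToK Fq c) := hv.extends_kabs _
  obtain ⟨β, hβ, hβle⟩ := exists_isRoot_abs_sub_le (f := R.map (φ Fq))
    (x := toL Fq ξ ^ p ^ m) hv.isNonarchimedean_absoluteValue (IsAlgClosed.splits _)
    (by rwa [natDegree_map_eq_of_injective φ_injective])
    (by rw [leadingCoeff_map_of_injective φ_injective, hv.absoluteValue_apply, hφ]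
        exact one_le_kabs_polyToK (leadingCoeff_ne_zero.2 hR.ne_zero))
    (by rw [discr_map φ_injective hdeg, hv.absoluteValue_apply, hφ]
        exact one_le_kabs_polyToK (discr_ne_zero_of_irreducible hR hder))
    (by rwa [← heval, hv.absoluteValue_apply, hv.apply_evalL_toL])
  obtain ⟨α, rfl⟩ := IsAlgClosed.exists_pow_nat_eq β hp
  refine ⟨α, by rw [heval]; exact hβ, ?_⟩
  rw [← sub_pow_char_pow, ← heval, natDegree_map_eq_of_injective φ_injective,
    ← hv.Hpoly_eq_gaussNorm, map_pow, map_pow] at hβle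
  simp only [hv.absoluteValue_apply, hv.apply_evalL_toL, hv.extends_kabs] at hβle
  refine hβle.trans (mul_le_mul_of_nonneg_left (max_le ?_ ?_) ?_)
  · exact one_le_pow₀ (le_max_left _ _)
  · exact pow_le_pow_left₀ (kabs_nonneg ξ) (le_max_right _ _) _
  · exact mul_nonneg (kabs_nonneg _) (Real.rpow_nonneg (Hpoly_pos hR.ne_zero).le _)

lemma le_mul_rpow_of_pow_le {y c H : ℝ} {d m M : ℕ} (hc : 0 ≤ c) (hH : 1 ≤ H) (hw : 0 ≤ w)
    (hm : m ≠ 0) (hmM : m ≤ M) (hd : d ≤ n) (h : y ^ m ≤ H ^ (-w) * H ^ ((d : ℝ) - 2) * c ^ m) :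
    y ≤ c * H ^ (-((w + 2) / M - n - 1) - 1) := by
  have hH0 : 0 < H := one_pos.trans_le hH
  have hm1 : (1 : ℝ) ≤ m := mod_cast Nat.one_le_iff_ne_zero.2 hm
  have hM : (0 : ℝ) < M := mod_cast (Nat.pos_of_ne_zero hm).trans_le hmM
  have hexp : -w + ((d : ℝ) - 2) ≤ (-((w + 2) / M - n - 1) - 1) * m := by
    have h1 : (w + 2) / M * m ≤ w + 2 := by
      rw [div_mul_eq_mul_div, div_le_iff₀ hM]
      gcongr
    have h2 : (d : ℝ) ≤ n * m :=
      (Nat.cast_le.2 hd).trans (le_mul_of_one_le_right n.cast_nonneg hm1)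
    linarith
  refine le_of_pow_le_pow_left₀ hm (by positivity) (h.trans ?_)
  rw [← Real.rpow_add hH0, mul_pow, ← Real.rpow_mul_natCast hH0.le, mul_comm]
  gcongr

lemma tendsto_Hpoly_of_subset_irreducibleApproximants {S : Set Fq[X][X]}
    (hS : S ⊆ irreducibleApproximants n ξ w) : Tendsto (Hpoly Fq) (cofinite ⊓ 𝓟 S) atTop :=
  (tendsto_Hpoly_atTop n).mono_left
    (inf_le_inf_left cofinite (principal_mono.2 fun _ hQ ↦ (hS hQ).2.2.1))

lemma coe_le_wStarExp_of_infinite_expand (hv : IsAbsExt Fq v) (hw : 0 ≤ w) {M : ℕ}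
    {S : Set Fq[X][X]} (hS : S ⊆ irreducibleApproximants n ξ w) (hinf : S.Infinite)
    (hexp : ∀ Q ∈ S, ∃ m R, Q = expand _ (p ^ m) R ∧ derivative R ≠ 0 ∧ p ^ m ≤ M) :
    (((w + 2) / M - n - 1 : ℝ) : EReal) ≤ wStarExp Fq v n ξ := by
  have := cofinite_inf_principal_neBot_iff.2 hinf
  refine coe_le_wStarExp (c := max 1 (kabs Fq ξ)) (infinite_of_tendsto_zero
    (d := fun α ↦ (heightAlg Fq α)⁻¹)
    (tendsto_Hpoly_of_subset_irreducibleApproximants hS).inv_tendsto_atTop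
    (eventually_inf_principal.2 (.of_forall fun Q hQ ↦ ?_)))
  obtain ⟨m, R, rfl, hder, hm⟩ := hexp Q hQ
  obtain ⟨hirr, -, hdeg, hpos, hle⟩ := hS hQ
  have hpm : 0 < p ^ m := pow_pos (Fact.out : p.Prime).pos m
  obtain ⟨α, hroot, hα⟩ := hv.exists_evalL_expand_eq_zero hirr hder
    (hle.trans (Hpoly_rpow_neg_le_one hw hirr.ne_zero))
  have hheight := heightAlg_eq_Hpoly hirr hroot
  have hR : 1 ≤ Hpoly Fq R := Hpoly_expand hpm R ▸ one_le_Hpoly hirr.ne_zero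
  refine ⟨α, ⟨isAlgElem_of_irreducible hirr hroot,
    (degAlg_eq_natDegree hirr hroot).trans_le hdeg, ?_, ?_⟩, ?_, ?_⟩
  · refine (hv.nonneg _).lt_of_ne' fun h0 ↦ hpos.ne ?_
    rw [← hv.apply_evalL_toL, sub_eq_zero.1 ((hv.eq_zero_iff _).1 h0), hroot,
      (hv.eq_zero_iff 0).2 rfl]
  · rw [hheight]
    rw [Hpoly_expand hpm] at hle ⊢
    rw [natDegree_expand] at hdeg
    refine le_mul_rpow_of_pow_le (by positivity) hR hw hpm.ne' hm
      ((Nat.le_mul_of_pos_right _ hpm).trans hdeg) (hα.trans ?_)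
    gcongr
  · rw [hheight]
    exact inv_pos.2 (Hpoly_pos hirr.ne_zero)
  · simp [hheight]

lemma coe_le_coe_mul_add_coe {a b : ℝ} {y : EReal} (ha : 0 < a)
    (h : (((w - b) / a : ℝ) : EReal) ≤ y) : (w : EReal) ≤ a * y + b := by
  induction y with
  | bot => exact absurd h (EReal.bot_lt_coe _).not_ge
  | top => simp [EReal.coe_mul_top_of_pos ha]
  | coe y =>
    rw [EReal.coe_le_coe_iff, div_le_iff₀ ha] at h
    rw [← EReal.coe_mul, ← EReal.coe_add, EReal.coe_le_coe_iff]
    linarith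

lemma exists_eq_expand_pow_le_of_mem_irreducibleApproximants {k : ℕ} (hk : n < p ^ (k + 1))
    {Q : Fq[X][X]} (hQ : Q ∈ irreducibleApproximants n ξ w) :
    ∃ m R, Q = expand _ (p ^ m) R ∧ derivative R ≠ 0 ∧ p ^ m ≤ p ^ k := by
  have hp : p.Prime := Fact.out
  obtain ⟨-, hdeg0, hdeg, -⟩ := hQ
  obtain ⟨m, R, rfl, hder⟩ := exists_eq_expand_pow_of_natDegree_pos p hp hdeg0
  refine ⟨m, R, rfl, hder, Nat.pow_le_pow_right hp.pos (Nat.lt_succ_iff.1 ?_)⟩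
  rw [natDegree_expand] at hdeg0 hdeg
  refine (Nat.pow_lt_pow_iff_right hp.one_lt).1 (lt_of_le_of_lt ?_ (hdeg.trans_lt hk))
  exact Nat.le_mul_of_pos_left _ (Nat.pos_of_mul_pos_right hdeg0)

lemma wExp_le_pow_mul_wStarExp_add (hv : IsAbsExt Fq v) (hn : 1 ≤ n) {k : ℕ}
    (hk : n < p ^ (k + 1)) (ξ : K Fq) :
    wExp Fq n ξ ≤ (((p : ℝ) ^ k : ℝ) : EReal) * wStarExp Fq v n ξ +
      (((p : ℝ) ^ k * ((n : ℝ) + 1) - 2 : ℝ) : EReal) := by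
  have hpk : (1 : ℝ) ≤ (p : ℝ) ^ k := one_le_pow₀ (mod_cast (Fact.out : p.Prime).one_le)
  have hpk0 : (0 : ℝ) < (p : ℝ) ^ k := one_pos.trans_le hpk
  refine EReal.ge_of_forall_gt_iff_ge.1 fun w hw ↦ coe_le_coe_mul_add_coe hpk0 ?_
  rcases lt_or_ge w 0 with hw0 | hw0
  · refine le_trans (EReal.coe_nonpos.2 (div_nonpos_of_nonpos_of_nonneg ?_ hpk0.le))
      (wStarExp_nonneg hv hn ξ)
    have hn' : (1 : ℝ) ≤ n := mod_cast hn
    nlinarith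
  · refine le_of_eq_of_le ?_ (coe_le_wStarExp_of_infinite_expand (M := p ^ k) hv hw0 subset_rfl
      (infinite_irreducibleApproximants hw0 hw)
      fun Q ↦ exists_eq_expand_pow_le_of_mem_irreducibleApproximants hk)
    rw [Nat.cast_pow]
    congr 1
    field_simp
    ring

lemma exists_eq_sum_C_X_pow_mul_pow {R : Type*} [CommRing R] [IsDomain R] [CharP R p]
    [PerfectRing R p] {Q : R[X][X]} (hder : derivative Q = 0) :
    ∃ P : ℕ → R[X][X], (∀ i, (P i).natDegree * p ≤ Q.natDegree) ∧
      Q = ∑ i ∈ Finset.range p, C (X ^ i) * P i ^ p := by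
  have hQ : expand R[X] p (contract p Q) = Q := expand_contract p hder (Fact.out : p.Prime).ne_zero
  choose g hg using fun j ↦ exists_eq_sum_X_pow_mul_pow_expChar p ((contract p Q).coeff j)
  set d := (contract p Q).natDegree
  set P : ℕ → R[X][X] := fun i ↦ ∑ j ∈ Finset.range (d + 1), C (g j i) * X ^ j
  refine ⟨P, fun i ↦ ?_, ?_⟩
  · rw [← hQ, natDegree_expand]
    refine Nat.mul_le_mul_right p (natDegree_sum_le_of_forall_le _ _ fun j hj ↦ ?_)
    exact (natDegree_C_mul_X_pow_le _ _).trans (Nat.lt_succ_iff.1 (Finset.mem_range.1 hj))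
  have hcontract : contract p Q = ∑ i ∈ Finset.range p, C (X ^ i) * (P i).map (frobenius R[X] p) :=
    calc contract p Q = ∑ j ∈ Finset.range (d + 1), C ((contract p Q).coeff j) * X ^ j :=
          as_sum_range_C_mul_X_pow _
      _ = ∑ j ∈ Finset.range (d + 1), ∑ i ∈ Finset.range p,
            C (X ^ i) * (C (g j i ^ p) * X ^ j) := by
          refine Finset.sum_congr rfl fun j _ ↦ ?_
          rw [hg j, map_sum, Finset.sum_mul]
          simp only [C_mul, mul_assoc]
      _ = _ := by
          rw [Finset.sum_comm]
          simp [P, Polynomial.map_sum, Finset.mul_sum, frobenius_def]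
  conv_lhs => rw [← hQ, hcontract]
  simp only [map_sum, map_mul, expand_C, ← map_expand, map_frobenius_expand]

lemma exists_pow_kabs_evalK_le_of_derivative_eq_zero {Q : Fq[X][X]} (hder : derivative Q = 0)
    (hQ : 0 < kabs Fq (evalK Fq Q ξ)) :
    ∃ P : Fq[X][X], P.natDegree * p ≤ Q.natDegree ∧ Hpoly Fq P ^ p ≤ Hpoly Fq Q ∧
      0 < kabs Fq (evalK Fq P ξ) ∧ kabs Fq (evalK Fq P ξ) ^ p ≤ kabs Fq (evalK Fq Q ξ) := by
  have hp : p.Prime := Fact.out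
  obtain ⟨P, hdeg, hP⟩ := exists_eq_sum_C_X_pow_mul_pow (p := p) hder
  have heval : evalK Fq Q ξ =
      ∑ i ∈ Finset.range p, polyToK Fq X ^ i * evalK Fq (P i) ξ ^ p := by
    conv_lhs => rw [hP]
    simp only [evalK, eval₂_finsetSum, eval₂_mul, eval₂_pow, eval₂_C, map_pow]
  have hpow (f : Fq[X][X]) (j : ℕ) : (f ^ p).coeff (j * p) = f.coeff j ^ p := by
    rw [← map_frobenius_expand, coeff_map, coeff_expand_mul hp.pos, frobenius_def]
  have hcoeff (j : ℕ) : polyToK Fq (Q.coeff (j * p)) =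
      ∑ i ∈ Finset.range p, polyToK Fq X ^ i * polyToK Fq ((P i).coeff j) ^ p := by
    conv_lhs => rw [hP]
    simp only [finsetSum_coeff, coeff_C_mul, hpow]
    simp only [map_sum, map_mul, map_pow]
  obtain ⟨i, hi, hPi⟩ : ∃ i < p, evalK Fq (P i) ξ ≠ 0 := by
    by_contra! h0
    refine kabs_pos.1 hQ (heval.trans (Finset.sum_eq_zero fun i hi ↦ ?_))
    rw [h0 i (Finset.mem_range.1 hi), zero_pow hp.ne_zero, mul_zero]
  refine ⟨P i, hdeg i, ?_, kabs_pos.2 hPi, ?_⟩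
  · obtain ⟨j, hj⟩ := exists_kabs_coeff_eq_Hpoly (P i)
    rw [← hj]
    refine le_trans ?_ (kabs_coeff_le_Hpoly Q (j * p))
    rw [hcoeff]
    exact kabs_pow_le_kabs_sum_X_pow_mul_pow (fun i ↦ polyToK Fq ((P i).coeff j)) hi
  · rw [heval]
    exact kabs_pow_le_kabs_sum_X_pow_mul_pow (fun i ↦ evalK Fq (P i) ξ) hi

lemma coe_le_wExp_of_derivative_eq_zero {S : Set Fq[X][X]} {m : ℕ} (hw : 0 < w)
    (hm : n < (m + 1) * p) (hS : S ⊆ irreducibleApproximants n ξ w) (hinf : S.Infinite)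
    (hder : ∀ Q ∈ S, derivative Q = 0) : (w : EReal) ≤ wExp Fq m ξ := by
  have hp : p ≠ 0 := (Fact.out : p.Prime).ne_zero
  have := cofinite_inf_principal_neBot_iff.2 hinf
  refine coe_le_wExp (c := 1) (infinite_of_tendsto_zero
    (d := fun P ↦ kabs Fq (evalK Fq P ξ) ^ p) ((tendsto_rpow_neg_atTop hw).comp
      (tendsto_Hpoly_of_subset_irreducibleApproximants hS))
    (eventually_inf_principal.2 (.of_forall fun Q hQ ↦ ?_)))
  obtain ⟨-, -, hdeg, hpos, hle⟩ := hS hQ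
  obtain ⟨P, hPdeg, hPH, hPpos, hPle⟩ :=
    exists_pow_kabs_evalK_le_of_derivative_eq_zero (p := p) (hder Q hQ) hpos
  have hH : 0 < Hpoly Fq P := Hpoly_pos (ne_zero_of_kabs_evalK_pos hPpos)
  refine ⟨P, ⟨?_, hPpos, ?_⟩, pow_pos hPpos p, hPle.trans hle⟩
  · exact Nat.lt_succ_iff.1 (Nat.lt_of_mul_lt_mul_right ((hPdeg.trans hdeg).trans_lt hm))
  · rw [one_mul]
    refine le_of_pow_le_pow_left₀ hp (Real.rpow_nonneg hH.le _) ?_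
    calc kabs Fq (evalK Fq P ξ) ^ p ≤ Hpoly Fq Q ^ (-w) := hPle.trans hle
      _ ≤ (Hpoly Fq P ^ p) ^ (-w) :=
          Real.rpow_le_rpow_of_nonpos (pow_pos hH p) hPH (neg_nonpos.2 hw.le)
      _ = (Hpoly Fq P ^ (-w)) ^ p := (Real.rpow_pow_comm hH.le _ _).symm

lemma wExp_one_le_wStarExp_one (hv : IsAbsExt Fq v) (ξ : K Fq) :
    wExp Fq 1 ξ ≤ wStarExp Fq v 1 ξ := by
  have hp : Fact (ringChar Fq).Prime := ⟨CharP.prime_ringChar Fq⟩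
  have h := wExp_le_pow_mul_wStarExp_add (k := 0) hv le_rfl (by simpa using hp.out.one_lt) ξ
  norm_num at h
  exact h

lemma wExp_le_wStarExp_add (hv : IsAbsExt Fq v) (hn : 1 ≤ n) (hnp : n < 2 * p) (ξ : K Fq) :
    wExp Fq n ξ ≤ wStarExp Fq v n ξ + (((n : ℝ) - 1 : ℝ) : EReal) := by
  have hn' : (1 : ℝ) ≤ n := mod_cast hn
  refine EReal.ge_of_forall_gt_iff_ge.1 fun w hw ↦ ?_
  rw [← one_mul (wStarExp Fq v n ξ), ← EReal.coe_one]
  refine coe_le_coe_mul_add_coe one_pos ?_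
  rw [div_one]
  rcases le_or_gt w 0 with hw0 | hw0
  · exact (EReal.coe_nonpos.2 (by linarith)).trans (wStarExp_nonneg hv hn ξ)
  have hinf := infinite_irreducibleApproximants hw0.le hw
  by_cases hinsep : {Q ∈ irreducibleApproximants n ξ w | derivative Q = 0}.Infinite
  · calc ((w - (n - 1) : ℝ) : EReal) ≤ (w : EReal) := EReal.coe_le_coe_iff.2 (by linarith)
      _ ≤ wExp Fq 1 ξ :=
          coe_le_wExp_of_derivative_eq_zero hw0 hnp (Set.sep_subset _ _) hinsep fun _ hQ ↦ hQ.2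
      _ ≤ wStarExp Fq v 1 ξ := wExp_one_le_wStarExp_one hv ξ
      _ ≤ wStarExp Fq v n ξ := wStarExp_mono v hn ξ
  · have hsep := coe_le_wStarExp_of_infinite_expand (p := p) (M := 1) hv hw0.le Set.sdiff_subset
      (hinf.sdiff (Set.not_infinite.1 hinsep))
      fun Q hQ ↦ ⟨0, Q, by simp, fun h0 ↦ hQ.2 ⟨hQ.1, h0⟩, by simp⟩
    refine le_of_eq_of_le ?_ hsep
    congr 1
    ring

end InseparableDegree

theorem stmt17 (Fq : Type) [Field Fq] [Fintype Fq]
    (v : L Fq → ℝ) (hv : IsAbsExt Fq v)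
    (n : ℕ) (hn : 1 ≤ n) (ξ : K Fq) (k : ℕ)
    (hk1 : (ringChar Fq) ^ k ≤ n) (hk2 : n < (ringChar Fq) ^ (k + 1)) :
    (wStarExp Fq v n ξ ≤ wExp Fq n ξ ∧
     wExp Fq n ξ ≤ (((ringChar Fq : ℝ) ^ k : ℝ) : EReal) * wStarExp Fq v n ξ +
       (((ringChar Fq : ℝ) ^ k * ((n : ℝ) + 1) - 2 : ℝ) : EReal)) ∧
    (n < 2 * ringChar Fq →
      wExp Fq n ξ ≤ wStarExp Fq v n ξ + (((n : ℝ) - 1 : ℝ) : EReal)) := by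
  have hp : Fact (ringChar Fq).Prime := ⟨CharP.prime_ringChar Fq⟩
  exact ⟨⟨wStarExp_le_wExp hv n ξ, wExp_le_pow_mul_wStarExp_add hv hn hk2 ξ⟩,
    fun hnp ↦ wExp_le_wStarExp_add hv hn hnp ξ⟩

end Ooto
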